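/- arXiv:2203.00950 — 4 statements merged into one kernel-verified Lean document; each statement's English description precedes it below -/
import Mathlib

section
/- Let Ω ⊆ ℝ^N be open, f : [0,T] × Ω → ℝ^N continuous, and G an open bounded set with cl(G) ⊆ Ω. Let (V_u)_{u∈∂G} be a family of non-degenerate bounding functions for G such that ⟨f(t,u), ∇V_u(u)⟩ ≤ 0 for all u ∈ ∂G and t ∈ [0,T]. Suppose there exists a continuous function g : ∂G → ℝ^N such that sup_{u∈∂G} ⟨g(u), ∇V_u(u)⟩ < 0. If cl(G) is homeomorphic to a closed ball of ℝ^N, then there exists a differentiable y : [0,T] → Ω with y'(t) = f(t, y(t)) for all t ∈ [0,T], y(0) = y(T), and y(t) ∈ cl(G) for all t ∈ [0,T]. -/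
open Set Metric
open scoped RealInnerProductSpace

/-!
The field `f` is replaced on the compact set `[0, T] × cl G` by Lipschitz fields `h` uniformly close
to `f + εg`, which point strictly into `G` along `∂G`: there `∇V_u(u)` is an outer normal, because
`V_u` restricted to `G` is negative and vanishes at `u`. A solution of `ẏ = h(t, y)` starting in `G`
cannot leave `G`, since at the first exit time minus its velocity is tangent to `G`, hence makes no
acute angle with the outer normal, whereas the velocity makes an obtuse one. So the time-`T` map
sends `cl G` to itself, and it has a fixed point by Brouwer's theorem. As `ε → 0`, limits of the
resulting periodic solutions solve `ẏ = f(t, y)`.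

Brouwer's theorem is proved following Milnor and Rogers: for a Lipschitz map `g` which is the
identity off a set `s`, the volume `∫ₛ det (1 + t • D(g - 1))` is a polynomial in `t`, and for small
`t` it equals the volume of `s`, because then `1 + t • (g - 1)` permutes `s` with positive Jacobian;
hence the same holds at `t = 1`. A retraction of the ball onto its sphere would have zero Jacobian.
-/

open Filter Topology MeasureTheory
open scoped NNReal

section Determinant

theorem exists_polynomial_eval_eq_det_one_add_smul {R M : Type*} [CommRing R]
    [StrongRankCondition R] [AddCommGroup M] [Module R M] [Module.Free R M] [Module.Finite R M]
    (φ : M →ₗ[R] M) :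
    ∃ P : Polynomial R, P.natDegree ≤ Module.finrank R M ∧
      ∀ t : R, P.eval t = LinearMap.det (1 + t • φ) := by
  classical
  let b := Module.Free.chooseBasis R M
  let A := LinearMap.toMatrix b b φ
  refine ⟨((Polynomial.X : Polynomial R) • A.map Polynomial.C
    + (1 : Matrix _ _ R).map Polynomial.C).det, ?_, fun t => ?_⟩
  · rw [Module.finrank_eq_card_chooseBasisIndex]
    exact Polynomial.natDegree_det_X_add_C_le A 1
  · have hA : LinearMap.toMatrix b b (1 + t • φ) = 1 + t • A := by
      rw [map_add, map_smul, LinearMap.toMatrix_one]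
    rw [← LinearMap.det_toMatrix b, hA, ← Polynomial.coe_evalRingHom, RingHom.map_det]
    congr 1
    ext i j
    simp only [RingHom.mapMatrix_apply, Matrix.map_apply, Matrix.add_apply, Matrix.smul_apply,
      smul_eq_mul, Polynomial.coe_evalRingHom, Polynomial.eval_add, Polynomial.eval_mul,
      Polynomial.eval_X, Polynomial.eval_C, add_comm]

theorem det_one_add_eq_sum_lagrange {𝕜 V : Type*} [Field 𝕜] [DecidableEq 𝕜] [AddCommGroup V]
    [Module 𝕜 V] [FiniteDimensional 𝕜 V] {s : Finset 𝕜} (hs : Module.finrank 𝕜 V < s.card)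
    (φ : V →ₗ[𝕜] V) :
    LinearMap.det (1 + φ) =
      ∑ τ ∈ s, LinearMap.det (1 + τ • φ) * (Lagrange.basis s id τ).eval 1 := by
  obtain ⟨P, hdeg, hP⟩ := exists_polynomial_eval_eq_det_one_add_smul φ
  have hlt : P.degree < s.card :=
    Polynomial.degree_le_natDegree.trans_lt (Nat.cast_lt.2 (hdeg.trans_lt hs))
  have hinterp := congrArg (Polynomial.eval 1)
    (Lagrange.eq_interpolate (v := id) Function.injective_id.injOn hlt)
  simpa only [Lagrange.interpolate_apply, Polynomial.eval_finsetSum, Polynomial.eval_mul,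
    Polynomial.eval_C, hP, one_smul, id] using hinterp

theorem sum_eval_one_lagrange_basis {𝕜 : Type*} [Field 𝕜] [DecidableEq 𝕜] {s : Finset 𝕜}
    (hs : s.Nonempty) : ∑ τ ∈ s, (Lagrange.basis s id τ).eval 1 = 1 := by
  rw [← Polynomial.eval_finsetSum, Lagrange.sum_basis Function.injective_id.injOn hs,
    Polynomial.eval_one]

end Determinant

section Lipschitz

variable {E F : Type*} [NormedAddCommGroup E] [NormedSpace ℝ E] [PseudoMetricSpace F]
  {K : ℝ≥0}

theorem lipschitzWith_piecewise {s : Set E} [∀ x, Decidable (x ∈ s)] (hs : IsClosed s)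
    {f g : E → F} (hf : LipschitzOnWith K f s) (hg : LipschitzWith K g)
    (hfg : EqOn f g (frontier s)) : LipschitzWith K (s.piecewise f g) := by
  have hcross : ∀ x ∈ s, ∀ y ∉ s, dist (f x) (g y) ≤ K * dist x y := by
    intro x hx y hy
    obtain ⟨z, hz, hzs⟩ : (segment ℝ x y ∩ frontier s).Nonempty := by
      rw [frontier_eq_closure_inter_closure, hs.closure_eq]
      refine isPreconnected_closed_iff.1 (convex_segment x y).isPreconnected _ _ hs isClosed_closure
        (fun w _ => ?_) ⟨x, left_mem_segment ℝ x y, hx⟩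
        ⟨y, right_mem_segment ℝ x y, subset_closure hy⟩
      exact (em (w ∈ s)).imp_right fun hw => subset_closure hw
    calc dist (f x) (g y) ≤ dist (f x) (f z) + dist (g z) (g y) := by
          rw [← hfg hzs]; exact dist_triangle _ _ _
      _ ≤ K * dist x z + K * dist z y := add_le_add
          (hf.dist_le_mul x hx z (hs.frontier_subset hzs)) (hg.dist_le_mul z y)
      _ = K * dist x y := by rw [← mul_add, dist_add_dist_of_mem_segment hz]
  refine LipschitzWith.of_dist_le_mul fun x y => ?_
  by_cases hx : x ∈ s <;> by_cases hy : y ∈ s <;> simp only [piecewise, hx, hy, if_true, if_false]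
  · exact hf.dist_le_mul x hx y hy
  · exact hcross x hx y hy
  · rw [dist_comm, dist_comm x]
    exact hcross y hy x hx
  · exact hg.dist_le_mul x y

theorem bijective_id_add_of_lipschitzWith [CompleteSpace E] {h : E → E} (hh : LipschitzWith K h)
    (hK : K < 1) : Function.Bijective (id + h) := by
  have hlin : ApproximatesLinearOn (id + h) (ContinuousLinearEquiv.refl ℝ E : E →L[ℝ] E) univ K :=
    LipschitzOnWith.approximatesLinearOn (by
      have hsub : (id + h) - ⇑(ContinuousLinearEquiv.refl ℝ E : E →L[ℝ] E) = h := by ext; simp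
      rw [hsub]
      exact hh.lipschitzOnWith)
  have hc : Subsingleton E ∨ K < ‖((ContinuousLinearEquiv.refl ℝ E).symm : E →L[ℝ] E)‖₊⁻¹ := by
    rcases subsingleton_or_nontrivial E with hE | hE
    · exact .inl hE
    · right
      have hnorm : ‖((ContinuousLinearEquiv.refl ℝ E).symm : E →L[ℝ] E)‖₊ = 1 :=
        ContinuousLinearMap.nnnorm_id
      rwa [hnorm, inv_one]
  exact ⟨injOn_univ.1 (hlin.injOn hc), hlin.surjective hc⟩

end Lipschitz

section Jacobian

variable {E : Type*} [NormedAddCommGroup E] [NormedSpace ℝ E] [FiniteDimensional ℝ E]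
  [MeasurableSpace E] [BorelSpace E] (μ : Measure E)
  {s : Set E} {h g : E → E} {K : ℝ≥0}

theorem integrableOn_det_one_add_smul_fderiv (hμ : μ s ≠ ⊤) (hh : LipschitzWith K h) (t : ℝ) :
    IntegrableOn (fun x => (1 + t • fderiv ℝ h x).det) s μ := by
  obtain ⟨C, hC⟩ := (isCompact_closedBall (0 : E →L[ℝ] E) K).exists_bound_of_continuousOn
    (f := fun A => (1 + t • A).det) (ContinuousLinearMap.continuous_det.comp
      (by fun_prop : Continuous fun A : E →L[ℝ] E => 1 + t • A)).continuousOn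
  refine Measure.integrableOn_of_bounded (M := C) hμ ?_ (ae_of_all _ fun x => hC _ ?_)
  · exact (ContinuousLinearMap.continuous_det.measurable.comp
      (((measurable_fderiv ℝ h).const_smul t).const_add 1)).aestronglyMeasurable
  · simpa using norm_fderiv_le_of_lipschitz ℝ hh

variable [μ.IsAddHaarMeasure]

theorem integral_abs_det_one_add_fderiv (hs : MeasurableSet s) (hh : LipschitzWith K h)
    (hK : K < 1) (h0 : EqOn h 0 sᶜ) (hd : ∀ x ∈ s, DifferentiableAt ℝ h x) :
    ∫ x in s, |(1 + fderiv ℝ h x).det| ∂μ = μ.real s := by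
  have hbij : Function.Bijective (id + h) := bijective_id_add_of_lipschitzWith hh hK
  have himage : (id + h) '' s = s := by
    have hcompl : (id + h) '' sᶜ = sᶜ := by
      rw [image_congr (g := id) fun x hx => by simp [h0 hx], image_id]
    rw [← compl_inj_iff, ← image_compl_eq hbij, hcompl]
  have hderiv : ∀ x ∈ s, HasFDerivWithinAt (id + h) (1 + fderiv ℝ h x) s x := fun x hx =>
    ((hasFDerivAt_id x).add (hd x hx).hasFDerivAt).hasFDerivWithinAt
  have hcv := integral_image_eq_integral_abs_det_fderiv_smul μ hs hderiv hbij.1.injOn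
    (fun _ => (1 : ℝ))
  rw [himage] at hcv
  simpa using hcv.symm

theorem eventually_integral_det_one_add_smul_fderiv (hs : MeasurableSet s) (hh : LipschitzWith K h)
    (h0 : EqOn h 0 sᶜ) (hd : ∀ x ∈ s, DifferentiableAt ℝ h x) :
    ∀ᶠ t in 𝓝 (0 : ℝ), ∫ x in s, (1 + t • fderiv ℝ h x).det ∂μ = μ.real s := by
  have hdet : ∀ᶠ A : E →L[ℝ] E in 𝓝 0, 0 < (1 + A).det := by
    refine ContinuousAt.eventually_lt continuousAt_const
      ((ContinuousLinearMap.continuous_det.comp (continuous_const_add 1)).continuousAt) ?_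
    simp [ContinuousLinearMap.det]
  obtain ⟨ε, hε, hpos⟩ := Metric.eventually_nhds_iff.1 hdet
  have hsmall : ∀ᶠ t in 𝓝 (0 : ℝ), ‖t‖₊ * K < 1 ∧ ‖t‖ * K < ε := by
    refine (ContinuousAt.eventually_lt (by fun_prop) continuousAt_const (by simp)).and
      (ContinuousAt.eventually_lt (by fun_prop) continuousAt_const (by simpa using hε))
  filter_upwards [hsmall] with t ht
  have hth : LipschitzWith (‖t‖₊ * K) (t • h) := (lipschitzWith_smul t).comp hh
  rw [← integral_abs_det_one_add_fderiv μ hs hth ht.1 (fun x hx => by simp [h0 hx])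
    fun x hx => (hd x hx).const_smul t]
  refine setIntegral_congr_fun hs fun x hx => ?_
  have hfd : fderiv ℝ (t • h) x = t • fderiv ℝ h x := fderiv_const_smul (hd x hx) t
  simp only [hfd]
  refine (abs_of_pos (hpos ?_)).symm
  rw [dist_zero_right, norm_smul]
  exact (mul_le_mul_of_nonneg_left (norm_fderiv_le_of_lipschitz ℝ hh) (norm_nonneg t)).trans_lt ht.2

theorem integral_det_fderiv_of_eqOn_id_compl (hs : MeasurableSet s) (hμ : μ s ≠ ⊤)
    (hg : LipschitzWith K g) (hid : EqOn g id sᶜ) (hd : ∀ x ∈ s, DifferentiableAt ℝ g x) :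
    ∫ x in s, (fderiv ℝ g x).det ∂μ = μ.real s := by
  classical
  set h : E → E := g - id with hh_def
  have hh : LipschitzWith (K + 1) h := hg.sub LipschitzWith.id
  have hdh : ∀ x ∈ s, DifferentiableAt ℝ h x := fun x hx => (hd x hx).sub differentiableAt_id
  have hnear := eventually_integral_det_one_add_smul_fderiv μ hs hh
    (fun x hx => by simp [hh_def, hid hx]) hdh
  obtain ⟨S, hSnear, hScard⟩ := (infinite_of_mem_nhds (0 : ℝ) hnear).exists_subset_card_eq
    (Module.finrank ℝ E + 1)
  -- Interpolate the degree-`dim E` polynomial `t ↦ det (1 + t • Dh)` at `dim E + 1` nodes near `0`.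
  have hlag : EqOn (fun x => (fderiv ℝ g x).det) (fun x => ∑ τ ∈ S,
      (1 + τ • fderiv ℝ h x).det * (Lagrange.basis S id τ).eval 1) s := by
    intro x hx
    have hfd : fderiv ℝ g x = 1 + fderiv ℝ h x := by
      rw [hh_def, fderiv_sub (hd x hx) differentiableAt_id, fderiv_id]
      exact (add_sub_cancel _ _).symm
    simp only [hfd]
    exact det_one_add_eq_sum_lagrange (by omega) (fderiv ℝ h x : E →ₗ[ℝ] E)
  rw [setIntegral_congr_fun hs hlag, integral_finsetSum _ fun τ _ =>
    (integrableOn_det_one_add_smul_fderiv μ hμ hh τ).mul_const _]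
  calc ∑ τ ∈ S, ∫ x in s, (1 + τ • fderiv ℝ h x).det * (Lagrange.basis S id τ).eval 1 ∂μ
      = ∑ τ ∈ S, μ.real s * (Lagrange.basis S id τ).eval 1 :=
        Finset.sum_congr rfl fun τ hτ => by rw [integral_mul_const, hSnear hτ]
    _ = μ.real s := by
        rw [← Finset.mul_sum, sum_eval_one_lagrange_basis (Finset.card_pos.1 (by omega)), mul_one]

end Jacobian

section Brouwer

/-- The fixed point property of a topological space: every continuous self-map has a fixed point.
It carries Brouwer's theorem from a ball over to the homeomorphic set `cl G`. -/
def FixedPointProperty (X : Type*) [TopologicalSpace X] : Prop :=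
  ∀ f : C(X, X), ∃ x, f x = x

theorem FixedPointProperty.of_homeomorph {X Y : Type*} [TopologicalSpace X] [TopologicalSpace Y]
    (hX : FixedPointProperty X) (e : X ≃ₜ Y) : FixedPointProperty Y := by
  intro f
  obtain ⟨x, hx⟩ := hX ⟨fun x => e.symm (f (e x)), by fun_prop⟩
  exact ⟨e x, e.symm_apply_eq.1 hx⟩

variable {E : Type*} [NormedAddCommGroup E] [InnerProductSpace ℝ E]

/-- The larger root `l` of `‖x + l • u‖ = 1`: for `‖x‖ ≤ 1` and `u ≠ 0`, the line through `x` in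
direction `u` leaves the closed unit ball at parameter `l`. -/
noncomputable def sphereParam (x u : E) : ℝ :=
  (-⟪x, u⟫ + √(⟪x, u⟫ ^ 2 + ‖u‖ ^ 2 * (1 - ‖x‖ ^ 2))) / ‖u‖ ^ 2

theorem norm_add_sphereParam_smul {x u : E} (hx : ‖x‖ ≤ 1) (hu : u ≠ 0) :
    ‖x + sphereParam x u • u‖ = 1 := by
  have hu2 : ‖u‖ ^ 2 ≠ 0 := pow_ne_zero _ (norm_ne_zero_iff.2 hu)
  have hD : 0 ≤ ⟪x, u⟫ ^ 2 + ‖u‖ ^ 2 * (1 - ‖x‖ ^ 2) := by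
    have hx2 : 0 ≤ 1 - ‖x‖ ^ 2 := by nlinarith [norm_nonneg x]
    positivity
  have hroot : sphereParam x u * ‖u‖ ^ 2 =
      -⟪x, u⟫ + √(⟪x, u⟫ ^ 2 + ‖u‖ ^ 2 * (1 - ‖x‖ ^ 2)) := div_mul_cancel₀ _ hu2
  have hsq := Real.sq_sqrt hD
  rw [← sq_eq_sq₀ (norm_nonneg _) zero_le_one, norm_add_sq_real, norm_smul, real_inner_smul_right,
    mul_pow, Real.norm_eq_abs, sq_abs]
  set l := sphereParam x u
  set d := √(⟪x, u⟫ ^ 2 + ‖u‖ ^ 2 * (1 - ‖x‖ ^ 2))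
  apply mul_right_cancel₀ hu2
  linear_combination (l * ‖u‖ ^ 2 + d + ⟪x, u⟫) * hroot + hsq

theorem sphereParam_eq_zero {x u : E} (hx : ‖x‖ = 1) (hxu : 0 ≤ ⟪x, u⟫) : sphereParam x u = 0 := by
  simp [sphereParam, hx, Real.sqrt_sq hxu]

theorem inner_sub_pos_of_norm_eq_one {x y : E} (hx : ‖x‖ = 1) (hy : ‖y‖ ≤ 1) (hne : y ≠ x) :
    0 < ⟪x, x - y⟫ := by
  have hpos : 0 < ‖x - y‖ ^ 2 := pow_pos (norm_pos_iff.2 (sub_ne_zero.2 hne.symm)) 2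
  rw [norm_sub_sq_real, hx] at hpos
  rw [inner_sub_right, real_inner_self_eq_norm_sq, hx]
  nlinarith [norm_nonneg y]

variable [FiniteDimensional ℝ E]

theorem det_eq_zero_of_hasFDerivAt_of_norm_eventually_eq {r : E → E} {r' : E →L[ℝ] E} {x : E}
    {c : ℝ} (hr : HasFDerivAt r r' x) (hx : r x ≠ 0)
    (hc : ∀ᶠ y in 𝓝 x, ‖r y‖ = c) : r'.det = 0 := by
  have horth : ∀ v, ⟪r x, r' v⟫ = 0 := by
    have hconst : HasFDerivAt (fun y => ‖r y‖ ^ 2) (0 : E →L[ℝ] ℝ) x :=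
      (hasFDerivAt_const (c ^ 2) x).congr_of_eventuallyEq (hc.mono fun y hy => by simp only [hy])
    intro v
    simpa using DFunLike.congr_fun (hr.norm_sq.unique hconst) v
  by_contra hdet
  obtain ⟨v, hv⟩ := ((LinearMap.equivOfDetNeZero (r' : E →ₗ[ℝ] E) hdet).surjective) (r x)
  have hv : r' v = r x := hv
  exact hx (inner_self_eq_zero (𝕜 := ℝ).1 (by simpa only [hv] using horth v))

theorem not_exists_contDiffOn_retraction_closedBall_sphere :
    ¬ ∃ r : E → E, ContDiffOn ℝ 1 r (closedBall 0 1) ∧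
      MapsTo r (closedBall 0 1) (sphere 0 1) ∧ EqOn r id (sphere 0 1) := by
  classical
  rintro ⟨r, hr, hmaps, hid⟩
  borelize E
  obtain ⟨K, hK⟩ := hr.exists_lipschitzOnWith one_ne_zero (convex_closedBall 0 1)
    (isCompact_closedBall 0 1)
  set g : E → E := (closedBall 0 1).piecewise r id
  have hg : LipschitzWith (max K 1) g := lipschitzWith_piecewise isClosed_closedBall
    (hK.weaken (le_max_left _ _)) (LipschitzWith.id.weaken (le_max_right _ _))
    (hid.mono frontier_closedBall_subset_sphere)
  have hgid : EqOn g id (ball 0 1)ᶜ := by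
    intro x hx
    by_cases hx1 : x ∈ closedBall (0 : E) 1
    · exact (piecewise_eq_of_mem _ _ _ hx1).trans
        (hid (mem_sphere.2 (le_antisymm hx1 (not_lt.1 hx))))
    · exact piecewise_eq_of_notMem _ _ _ hx1
  have hgr : ∀ x ∈ ball (0 : E) 1, g =ᶠ[𝓝 x] r := fun x hx =>
    (isOpen_ball.eventually_mem hx).mono fun y hy =>
      piecewise_eq_of_mem _ _ _ (ball_subset_closedBall hy)
  have hgd : ∀ x ∈ ball (0 : E) 1, DifferentiableAt ℝ g x := fun x hx =>
    (((hr.differentiableOn one_ne_zero).differentiableAt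
      (mem_of_superset (isOpen_ball.mem_nhds hx) ball_subset_closedBall)).congr_of_eventuallyEq
        (hgr x hx))
  have hdet : ∀ x ∈ ball (0 : E) 1, (fderiv ℝ g x).det = 0 := by
    intro x hx
    have hnorm : ∀ᶠ y in 𝓝 x, ‖g y‖ = 1 := by
      filter_upwards [hgr x hx, isOpen_ball.eventually_mem hx] with y hy hyb
      rw [hy]
      exact mem_sphere_zero_iff_norm.1 (hmaps (ball_subset_closedBall hyb))
    refine det_eq_zero_of_hasFDerivAt_of_norm_eventually_eq (hgd x hx).hasFDerivAt ?_ hnorm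
    exact norm_ne_zero_iff.1 (hnorm.self_of_nhds.trans_ne one_ne_zero)
  have hvol := integral_det_fderiv_of_eqOn_id_compl volume measurableSet_ball
    measure_ball_lt_top.ne hg hgid hgd
  rw [setIntegral_congr_fun measurableSet_ball hdet, integral_zero] at hvol
  exact (ENNReal.toReal_pos (measure_ball_pos volume 0 one_pos).ne' measure_ball_lt_top.ne).ne hvol

theorem exists_isFixedPt_of_contDiffOn_closedBall {p : E → E}
    (hp : ContDiffOn ℝ 1 p (closedBall 0 1))
    (hmaps : MapsTo p (closedBall 0 1) (closedBall 0 1)) :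
    ∃ x ∈ closedBall (0 : E) 1, Function.IsFixedPt p x := by
  by_contra! hne
  have hu : ∀ x ∈ closedBall (0 : E) 1, x - p x ≠ 0 := fun x hx =>
    sub_ne_zero.2 (Ne.symm (hne x hx))
  have houter : ∀ x ∈ sphere (0 : E) 1, 0 < ⟪x, x - p x⟫ := fun x hx =>
    inner_sub_pos_of_norm_eq_one (mem_sphere_zero_iff_norm.1 hx)
      (mem_closedBall_zero_iff.1 (hmaps (sphere_subset_closedBall hx)))
      (hne x (sphere_subset_closedBall hx))
  have hdisc : ∀ x ∈ closedBall (0 : E) 1,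
      ⟪x, x - p x⟫ ^ 2 + ‖x - p x‖ ^ 2 * (1 - ‖x‖ ^ 2) ≠ 0 := by
    intro x hx
    have hux := norm_pos_iff.2 (hu x hx)
    rcases (mem_closedBall_zero_iff.1 hx).lt_or_eq with hlt | heq
    · have : 0 < 1 - ‖x‖ ^ 2 := by nlinarith [norm_nonneg x]
      positivity
    · have := houter x (mem_sphere_zero_iff_norm.2 heq)
      rw [heq]
      positivity
  have hsub : ContDiffOn ℝ 1 (fun x => x - p x) (closedBall 0 1) := contDiffOn_id.sub hp
  have hinner := contDiffOn_id.inner ℝ hsub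
  have hparam : ContDiffOn ℝ 1 (fun x => sphereParam x (x - p x)) (closedBall 0 1) :=
    (hinner.neg.add (((hinner.pow 2).add ((hsub.norm_sq ℝ).mul
      (contDiffOn_const.sub (contDiffOn_id.norm_sq ℝ)))).sqrt hdisc)).div (hsub.norm_sq ℝ)
      fun x hx => pow_ne_zero _ (norm_ne_zero_iff.2 (hu x hx))
  refine not_exists_contDiffOn_retraction_closedBall_sphere (E := E)
    ⟨fun x => x + sphereParam x (x - p x) • (x - p x),
      contDiffOn_id.add (hparam.smul hsub), fun x hx => ?_, fun x hx => ?_⟩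
  · exact mem_sphere_zero_iff_norm.2
      (norm_add_sphereParam_smul (mem_closedBall_zero_iff.1 hx) (hu x hx))
  · simp [sphereParam_eq_zero (mem_sphere_zero_iff_norm.1 hx) (houter x hx).le]

theorem exists_isFixedPt_of_continuous_closedBall {p : E → E} (hp : Continuous p)
    (hmaps : MapsTo p (closedBall 0 1) (closedBall 0 1)) :
    ∃ x ∈ closedBall (0 : E) 1, Function.IsFixedPt p x := by
  by_contra! hne
  obtain ⟨δ, hδ, hgap⟩ := (isCompact_closedBall (0 : E) 1).exists_forall_le'
    (f := fun x => ‖p x - x‖) (a := 0) (by fun_prop)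
    fun x hx => norm_pos_iff.2 (sub_ne_zero.2 (hne x hx))
  obtain ⟨q, hq, hclose, -⟩ := hp.exists_contDiff_approx 1 (ε := fun _ => δ / 2) (by fun_prop)
    fun _ => half_pos hδ
  simp only [dist_eq_norm] at hclose
  have hball : ∀ x ∈ closedBall (0 : E) 1, ‖q x‖ ≤ 1 + δ / 2 := by
    intro x hx
    have := norm_sub_norm_le (q x) (p x)
    linarith [hclose x, mem_closedBall_zero_iff.1 (hmaps hx)]
  have hpos : 0 < 1 + δ / 2 := by positivity
  obtain ⟨x, hx, hfix⟩ := exists_isFixedPt_of_contDiffOn_closedBall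
    (p := fun x => (1 + δ / 2)⁻¹ • q x) (hq.contDiffOn.const_smul _) fun x hx => by
      rw [mem_closedBall_zero_iff, norm_smul, norm_inv, Real.norm_of_nonneg hpos.le,
        inv_mul_le_iff₀ hpos, mul_one]
      exact hball x hx
  have hqx : q x = x + (δ / 2) • x := by
    rw [(inv_smul_eq_iff₀ hpos.ne').1 hfix, add_smul, one_smul]
  have hx1 : ‖q x - x‖ ≤ δ / 2 := by
    rw [hqx, add_sub_cancel_left, norm_smul, Real.norm_of_nonneg (half_pos hδ).le]
    exact mul_le_of_le_one_right (half_pos hδ).le (mem_closedBall_zero_iff.1 hx)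
  have := norm_sub_le_norm_sub_add_norm_sub (p x) (q x) x
  rw [norm_sub_rev (p x) (q x)] at this
  linarith [hgap x hx, hclose x]

theorem fixedPointProperty_unitClosedBall : FixedPointProperty (closedBall (0 : E) 1) := by
  intro f
  obtain ⟨F, hF⟩ := ContinuousMap.exists_restrict_eq isClosed_closedBall f
  obtain ⟨x, hx, hfix⟩ := exists_isFixedPt_of_continuous_closedBall
    (p := fun x => (F x : E)) (by fun_prop) fun x _ => (F x).2
  refine ⟨⟨x, hx⟩, Subtype.ext ?_⟩
  rw [← hF]
  exact hfix

theorem fixedPointProperty_closedBall (x₀ : E) {R : ℝ} (hR : 0 < R) :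
    FixedPointProperty (closedBall x₀ R) := by
  refine fixedPointProperty_unitClosedBall.of_homeomorph
    ((DilationEquiv.smulTorsor x₀ hR.ne').toHomeomorph.sets ?_)
  ext x
  simp only [mem_closedBall, dist_zero_right, DilationEquiv.coe_toHomeomorph, mem_preimage,
    DilationEquiv.smulTorsor_apply, vadd_eq_add, dist_add_self_left, norm_smul,
    Real.norm_of_nonneg hR.le]
  exact (mul_le_iff_le_one_right hR).symm

end Brouwer

section OuterNormal

variable {E : Type*} [NormedAddCommGroup E] [InnerProductSpace ℝ E] {G : Set E} {u w : E}

/-- `w` is an outer normal to `G` at `u` if it makes no acute angle with any direction tangent to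
`G` at `u`, i.e. if it lies in the polar of the tangent cone. -/
def IsOuterNormalAt (G : Set E) (u w : E) : Prop :=
  ∀ v ∈ posTangentConeAt G u, ⟪v, w⟫ ≤ 0

theorem isOuterNormalAt_gradient_of_isLocalMaxOn [CompleteSpace E] {φ : E → ℝ}
    (hφ : DifferentiableAt ℝ φ u) (hmax : IsLocalMaxOn φ G u) :
    IsOuterNormalAt G u (gradient φ u) := by
  intro v hv
  rw [real_inner_comm, inner_gradient_left]
  exact hmax.hasFDerivWithinAt_nonpos hφ.hasFDerivAt.hasFDerivWithinAt hv

theorem neg_mem_posTangentConeAt_of_hasDerivWithinAt_Iio {y : ℝ → E} {v : E} {τ : ℝ}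
    (hy : HasDerivWithinAt y v (Iio τ) τ) (hmem : ∀ᶠ s in 𝓝[<] τ, y s ∈ G) :
    -v ∈ posTangentConeAt G (y τ) := by
  refine mem_tangentConeAt_of_seq (𝓝[<] τ) (fun s => Real.toNNReal (τ - s)⁻¹)
    (fun s => y s - y τ) (tendsto_sub_nhds_zero_iff.2 hy.continuousWithinAt)
    (hmem.mono fun s hs => by simpa using hs) ?_
  refine ((hasDerivWithinAt_iff_tendsto_slope' self_notMem_Iio).1 hy).neg.congr' ?_
  filter_upwards [self_mem_nhdsWithin] with s hs
  rw [NNReal.smul_def, Real.coe_toNNReal _ (inv_nonneg.2 (sub_nonneg.2 (le_of_lt hs))),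
    slope_def_module, ← neg_smul, ← inv_neg, neg_sub]

theorem mapsTo_Icc_of_inward_on_frontier (hG : IsOpen G) {y y' : ℝ → E} {a b : ℝ}
    (hy : ∀ t ∈ Icc a b, HasDerivWithinAt y (y' t) (Icc a b) t) (ha : y a ∈ G)
    (hin : ∀ t ∈ Icc a b, y t ∈ frontier G → ∃ w, IsOuterNormalAt G (y t) w ∧ ⟪y' t, w⟫ < 0) :
    MapsTo y (Icc a b) G := by
  have hcont : ContinuousOn y (Icc a b) := fun t ht => (hy t ht).continuousWithinAt
  have hexit : IsCompact (Icc a b ∩ y ⁻¹' Gᶜ) :=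
    isCompact_Icc.of_isClosed_subset
      (hcont.preimage_isClosed_of_isClosed isClosed_Icc hG.isClosed_compl) inter_subset_left
  rw [mapsTo_iff_subset_preimage]
  by_contra hsub
  obtain ⟨t, ht, htG⟩ := not_subset.1 hsub
  obtain ⟨τ, ⟨hτ, hτG⟩, hτmin⟩ := hexit.exists_isLeast ⟨t, ht, htG⟩
  have haτ : a < τ := hτ.1.lt_of_ne fun h => hτG (h ▸ ha)
  have hbefore : ∀ᶠ s in 𝓝[<] τ, y s ∈ G := by
    filter_upwards [Ioo_mem_nhdsLT haτ] with s hs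
    by_contra hsG
    exact hs.2.not_ge (hτmin ⟨⟨hs.1.le, hs.2.le.trans hτ.2⟩, hsG⟩)
  have hleft : HasDerivWithinAt y (y' τ) (Iio τ) τ :=
    (hy τ hτ).mono_of_mem_nhdsWithin
      (mem_of_superset (Ioo_mem_nhdsLT haτ) fun s hs => ⟨hs.1.le, hs.2.le.trans hτ.2⟩)
  have hfrontier : y τ ∈ frontier G := by
    rw [hG.frontier_eq]
    exact ⟨mem_closure_of_tendsto hleft.continuousWithinAt hbefore, hτG⟩
  obtain ⟨w, hw, hneg⟩ := hin τ hτ hfrontier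
  have hback := hw _ (neg_mem_posTangentConeAt_of_hasDerivWithinAt_Iio hleft hbefore)
  rw [inner_neg_left] at hback
  linarith

end OuterNormal

section Approximation

variable {X E : Type*} [NormedAddCommGroup E] [NormedSpace ℝ E] [FiniteDimensional ℝ E]

theorem exists_continuousMap_eqOn_of_isClosed [TopologicalSpace X] [NormalSpace X] {s : Set X}
    (hs : IsClosed s) {g : X → E} (hg : ContinuousOn g s) : ∃ F : C(X, E), EqOn F g s := by
  have := TietzeExtension.of_tvs ℝ (E := E)
  obtain ⟨F, hF⟩ := ContinuousMap.exists_restrict_eq hs ⟨s.domRestrict g, hg.domRestrict⟩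
  exact ⟨F, fun x hx => DFunLike.congr_fun hF ⟨x, hx⟩⟩

theorem exists_lipschitzWith_norm_sub_lt [NormedAddCommGroup X] [NormedSpace ℝ X]
    [FiniteDimensional ℝ X] {s : Set X} (hs : IsCompact s) {F : X → E} (hF : ContinuousOn F s)
    {δ : ℝ} (hδ : 0 < δ) :
    ∃ (H : X → E) (K L : ℝ≥0), LipschitzWith K H ∧ (∀ x, ‖H x‖ ≤ L) ∧
      ∀ x ∈ s, ‖H x - F x‖ < δ := by
  obtain ⟨F₁, hF₁⟩ := exists_continuousMap_eqOn_of_isClosed hs.isClosed hF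
  obtain ⟨χ, hχ, -, hχsupp, -⟩ :=
    exists_continuous_one_zero_of_isCompact hs isClosed_empty (disjoint_empty s)
  obtain ⟨H, hH, hclose, hsupp⟩ := (χ.continuous.smul F₁.continuous).exists_contDiff_approx 1
    (ε := fun _ => δ) continuous_const fun _ => hδ
  have hHsupp : HasCompactSupport H := hχsupp.smul_right.mono hsupp
  obtain ⟨K, hK⟩ := hH.lipschitzWith_of_hasCompactSupport hHsupp one_ne_zero
  obtain ⟨L, hL⟩ := hHsupp.exists_bound_of_continuous hH.continuous
  refine ⟨H, K, L.toNNReal, hK, fun x => (hL x).trans (Real.le_coe_toNNReal L), fun x hx => ?_⟩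
  simpa [dist_eq_norm, hχ hx, hF₁ hx] using hclose x

end Approximation

section PeriodicSolution

variable {E : Type*} [NormedAddCommGroup E]

/-- `y` solves `ẏ = h(t, y)` on `[0, T]` with `y 0 = y T`, and stays in `K`. -/
structure IsPeriodicSolution [NormedSpace ℝ E] (h : ℝ → E → E) (T : ℝ) (K : Set E) (y : ℝ → E) :
    Prop where
  mapsTo : MapsTo y (Icc 0 T) K
  hasDerivWithinAt : ∀ t ∈ Icc 0 T, HasDerivWithinAt y (h t (y t)) (Icc 0 T) t
  periodic : y 0 = y T

section Limit

variable [NormedSpace ℝ E] {f : ℝ → E → E} {K : Set E} {y y' : ℝ → E} {a b : ℝ}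

theorem norm_image_sub_sub_smul_le {v : E} {C : ℝ}
    (hy : ∀ t ∈ Icc a b, HasDerivWithinAt y (y' t) (Icc a b) t)
    {s t : ℝ} (hs : s ∈ Icc a b) (ht : t ∈ Icc a b) (hC : ∀ τ ∈ uIcc s t, ‖y' τ - v‖ ≤ C) :
    ‖y t - y s - (t - s) • v‖ ≤ C * |t - s| := by
  have hderiv : ∀ τ ∈ uIcc s t,
      HasDerivWithinAt (fun τ => y τ - τ • v) (y' τ - v) (uIcc s t) τ := fun τ hτ => by
    simpa using ((hy τ (uIcc_subset_Icc hs ht hτ)).mono (uIcc_subset_Icc hs ht)).fun_sub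
      ((hasDerivWithinAt_id τ _).smul_const v)
  have hle := (convex_uIcc s t).norm_image_sub_le_of_norm_hasDerivWithin_le hderiv hC
    left_mem_uIcc right_mem_uIcc
  rwa [Real.norm_eq_abs, sub_sub_sub_comm, ← sub_smul] at hle

theorem exists_pos_forall_norm_image_sub_sub_smul_le (hK : IsCompact K)
    (hf : ContinuousOn (fun p : ℝ × E => f p.1 p.2) (Icc a b ×ˢ K)) {η : ℝ} (hη : 0 < η) :
    ∃ δ > 0, ∀ {ε : ℝ} {y y' : ℝ → E}, ε ≤ 1 → MapsTo y (Icc a b) K →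
      (∀ t ∈ Icc a b, HasDerivWithinAt y (y' t) (Icc a b) t) →
      (∀ t ∈ Icc a b, ‖y' t - f t (y t)‖ ≤ ε) →
      ∀ s ∈ Icc a b, ∀ t ∈ Icc a b, |t - s| < δ →
        ‖y t - y s - (t - s) • f s (y s)‖ ≤ (ε + η) * |t - s| := by
  have hcompact : IsCompact (Icc a b ×ˢ K) := isCompact_Icc.prod hK
  obtain ⟨M, hM⟩ := hcompact.exists_bound_of_continuousOn hf
  obtain ⟨δ, hδ, hunif⟩ := Metric.uniformContinuousOn_iff.1
    (hcompact.uniformContinuousOn_of_continuous hf) η hη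
  have hM1 : 1 ≤ |M| + 1 := by linarith [abs_nonneg M]
  refine ⟨δ / (|M| + 1), by positivity, fun {ε y y'} hε hmaps hy hclose s hs t ht hts => ?_⟩
  have hspeed : ∀ τ ∈ Icc a b, ‖y' τ‖ ≤ |M| + 1 := fun τ hτ => by
    have hfM := hM (τ, y τ) ⟨hτ, hmaps hτ⟩
    have := norm_le_norm_add_norm_sub' (y' τ) (f τ (y τ))
    linarith [hclose τ hτ, le_abs_self M]
  refine norm_image_sub_sub_smul_le hy hs ht fun τ hτ => ?_
  have hτI : τ ∈ Icc a b := uIcc_subset_Icc hs ht hτ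
  have hτs : |τ - s| * (|M| + 1) < δ :=
    (lt_div_iff₀ (by positivity)).1 ((abs_sub_left_of_mem_uIcc hτ).trans_lt hts)
  have hdist : dist (τ, y τ) (s, y s) < δ := by
    refine max_lt ((le_mul_of_one_le_right (abs_nonneg _) hM1).trans_lt hτs) ?_
    rw [dist_eq_norm]
    exact ((convex_Icc a b).norm_image_sub_le_of_norm_hasDerivWithin_le hy hspeed hs hτI).trans_lt
      (by rwa [mul_comm])
  calc ‖y' τ - f s (y s)‖ ≤ ‖y' τ - f τ (y τ)‖ + ‖f τ (y τ) - f s (y s)‖ :=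
        norm_sub_le_norm_sub_add_norm_sub _ _ _
    _ ≤ ε + η := add_le_add (hclose τ hτI)
        ((dist_eq_norm _ _).symm.trans_le (hunif _ ⟨hτI, hmaps hτI⟩ _ ⟨hs, hmaps hs⟩ hdist).le)

theorem exists_isPeriodicSolution_of_forall_approx (hK : IsCompact K) {T : ℝ} (hT : 0 ≤ T)
    (hf : ContinuousOn (fun p : ℝ × E => f p.1 p.2) (Icc 0 T ×ˢ K))
    (happrox : ∀ ε > 0, ∃ h y, IsPeriodicSolution h T K y ∧
      ∀ t ∈ Icc 0 T, ∀ u ∈ K, ‖h t u - f t u‖ ≤ ε) :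
    ∃ y, IsPeriodicSolution f T K y := by
  choose! h y hy hclose using happrox
  let U : Ultrafilter ℝ := Ultrafilter.of (𝓝[>] 0)
  have hU : (U : Filter ℝ) ≤ 𝓝[>] 0 := Ultrafilter.of_le _
  have hpos : ∀ᶠ ε : ℝ in U, 0 < ε := hU self_mem_nhdsWithin
  have hlim : ∀ t ∈ Icc 0 T, ∃ z ∈ K, Tendsto (fun ε => y ε t) U (𝓝 z) := fun t ht =>
    hK.ultrafilter_le_nhds (U.map fun ε => y ε t)
      (le_principal_iff.2 (hpos.mono fun ε hε => (hy ε hε).mapsTo ht))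
  choose! z hzK hz using hlim
  have hfz : ∀ t ∈ Icc 0 T, Tendsto (fun ε => f t (y ε t)) U (𝓝 (f t (z t))) := fun t ht =>
    (hf (t, z t) ⟨ht, hzK t ht⟩).tendsto.comp (tendsto_nhdsWithin_iff.2
      ⟨tendsto_const_nhds.prodMk_nhds (hz t ht),
        hpos.mono fun ε hε => ⟨ht, (hy ε hε).mapsTo ht⟩⟩)
  refine ⟨z, hzK, fun s hs => ?_, ?_⟩
  · rw [hasDerivWithinAt_iff_isLittleO, Asymptotics.isLittleO_iff]
    intro η hη
    obtain ⟨δ, hδ, hest⟩ := exists_pos_forall_norm_image_sub_sub_smul_le hK hf hη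
    filter_upwards [self_mem_nhdsWithin, mem_nhdsWithin_of_mem_nhds (ball_mem_nhds s hδ)]
      with t ht hts
    have hleft : Tendsto (fun ε => ‖y ε t - y ε s - (t - s) • f s (y ε s)‖) U
        (𝓝 ‖z t - z s - (t - s) • f s (z s)‖) :=
      (((hz t ht).sub (hz s hs)).sub ((hfz s hs).const_smul (t - s))).norm
    have hright : Tendsto (fun ε : ℝ => (ε + η) * |t - s|) U (𝓝 ((0 + η) * |t - s|)) :=
      Tendsto.mono_left (Continuous.tendsto (by fun_prop) 0) (hU.trans nhdsWithin_le_nhds)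
    rw [zero_add] at hright
    refine le_of_tendsto_of_tendsto hleft hright ?_
    filter_upwards [hpos, hU (Ioc_mem_nhdsGT one_pos)] with ε hε hε1
    exact hest hε1.2 (hy ε hε).mapsTo (hy ε hε).hasDerivWithinAt
      (fun τ hτ => hclose ε hε τ hτ _ ((hy ε hε).mapsTo hτ)) s hs t ht hts
  · refine tendsto_nhds_unique (hz 0 (left_mem_Icc.2 hT)) ?_
    exact (hz T (right_mem_Icc.2 hT)).congr' (hpos.mono fun ε hε => (hy ε hε).periodic.symm)

end Limit

section Poincare

variable {T : ℝ} {h : ℝ → E → E} {K L : ℝ≥0}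

theorem exists_continuousOn_flow [NormedSpace ℝ E] [CompleteSpace E] (hT : 0 ≤ T)
    (hlip : ∀ t, LipschitzWith K (h t)) (hcont : ∀ x, Continuous fun t => h t x)
    (hbound : ∀ t x, ‖h t x‖ ≤ L) {s : Set E} (hs : Bornology.IsBounded s) :
    ∃ α : E → ℝ → E, (∀ x ∈ s, α x 0 = x ∧
        ∀ t ∈ Icc 0 T, HasDerivWithinAt (α x) (h t (α x t)) (Icc 0 T) t) ∧
      ∀ t ∈ Icc 0 T, ContinuousOn (fun x => α x t) s := by
  obtain ⟨r, hr, hsr⟩ := hs.subset_closedBall_lt 0 (0 : E)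
  lift r to ℝ≥0 using hr.le
  lift T to ℝ≥0 using hT
  have hPL : IsPicardLindelof h (⟨0, left_mem_Icc.2 T.2⟩ : Icc (0 : ℝ) T) 0 (r + L * T) r L K :=
    { lipschitzOnWith := fun t _ => (hlip t).lipschitzOnWith
      continuousOn := fun x _ => (hcont x).continuousOn
      norm_le := fun t _ x _ => hbound t x
      mul_max_le := by simp }
  obtain ⟨α, hα, K', hK'⟩ :=
    hPL.exists_forall_mem_closedBall_eq_hasDerivWithinAt_lipschitzOnWith
  exact ⟨α, fun x hx => hα x (hsr hx), fun t ht => (hK' t ht).continuousOn.mono hsr⟩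

theorem exists_isPeriodicSolution_of_inward_on_frontier [InnerProductSpace ℝ E] [CompleteSpace E]
    {G : Set E} (hT : 0 ≤ T) (hlip : ∀ t, LipschitzWith K (h t))
    (hcont : ∀ x, Continuous fun t => h t x) (hbound : ∀ t x, ‖h t x‖ ≤ L)
    (hG : IsOpen G) (hGb : Bornology.IsBounded G) (hfix : FixedPointProperty (closure G))
    (hin : ∀ t ∈ Icc 0 T, ∀ u ∈ frontier G, ∃ w, IsOuterNormalAt G u w ∧ ⟪h t u, w⟫ < 0) :
    ∃ y, IsPeriodicSolution h T (closure G) y := by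
  obtain ⟨α, hα, hαcont⟩ := exists_continuousOn_flow hT hlip hcont hbound hGb.closure
  have hopen : ∀ t ∈ Icc 0 T, MapsTo (fun x => α x t) G G := by
    intro t ht x hx
    obtain ⟨h0, hderiv⟩ := hα x (subset_closure hx)
    exact mapsTo_Icc_of_inward_on_frontier hG hderiv (h0.symm ▸ hx)
      (fun t ht hu => hin t ht _ hu) ht
  have hclosure : ∀ t ∈ Icc 0 T, MapsTo (fun x => α x t) (closure G) (closure G) :=
    fun t ht => (hopen t ht).closure_of_continuousOn (hαcont t ht)
  have hTmem : T ∈ Icc 0 T := right_mem_Icc.2 hT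
  obtain ⟨x, hx⟩ := hfix
    ⟨(hclosure T hTmem).restrict, (hαcont T hTmem).mapsToRestrict (hclosure T hTmem)⟩
  exact ⟨α x, fun t ht => hclosure t ht x.2, (hα x x.2).2,
    (hα x x.2).1.trans (congrArg Subtype.val hx).symm⟩

end Poincare

section NonStrict

variable [InnerProductSpace ℝ E] [FiniteDimensional ℝ E] {T : ℝ} {f : ℝ → E → E} {G : Set E}
  {w g : E → E} {η c : ℝ}

theorem exists_lipschitzWith_inner_neg_on_frontier
    (hf : ContinuousOn (fun p : ℝ × E => f p.1 p.2) (Icc 0 T ×ˢ closure G))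
    (hGb : Bornology.IsBounded G) (hwη : ∀ u ∈ frontier G, ‖w u‖ ≤ η)
    (hfw : ∀ u ∈ frontier G, ∀ t ∈ Icc 0 T, ⟪f t u, w u⟫ ≤ 0) (hg : ContinuousOn g (frontier G))
    (hc : c < 0) (hgw : ∀ u ∈ frontier G, ⟪g u, w u⟫ ≤ c) {ε : ℝ} (hε : 0 < ε) :
    ∃ (h : ℝ × E → E) (K L : ℝ≥0), LipschitzWith K h ∧ (∀ p, ‖h p‖ ≤ L) ∧
      (∀ t ∈ Icc 0 T, ∀ u ∈ closure G, ‖h (t, u) - f t u‖ ≤ ε) ∧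
      ∀ t ∈ Icc 0 T, ∀ u ∈ frontier G, ⟪h (t, u), w u⟫ < 0 := by
  obtain ⟨g₁, hg₁⟩ := exists_continuousMap_eqOn_of_isClosed isClosed_frontier hg
  obtain ⟨M, hM⟩ := hGb.isCompact_closure.exists_bound_of_continuousOn g₁.continuous.continuousOn
  set σ := ε / 2 / (|M| + 1) with hσ_def
  have hσ : 0 < σ := by positivity
  have hσM : σ * |M| ≤ ε / 2 := by
    rw [hσ_def, div_mul_eq_mul_div, div_le_iff₀ (by positivity)]
    nlinarith
  set δ := min (ε / 2) (σ * -c / (|η| + 1))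
  have hδ : 0 < δ := lt_min (half_pos hε) (div_pos (mul_pos hσ (neg_pos.2 hc)) (by positivity))
  have hδη : δ * |η| < σ * -c :=
    calc δ * |η| < δ * (|η| + 1) := by linarith
      _ ≤ σ * -c := (le_div_iff₀ (by positivity)).1 (min_le_right _ _)
  obtain ⟨h, K, L, hK, hL, hclose⟩ := exists_lipschitzWith_norm_sub_lt
    (isCompact_Icc.prod hGb.isCompact_closure)
    (hf.add (by fun_prop : Continuous fun p : ℝ × E => σ • g₁ p.2).continuousOn) hδ
  refine ⟨h, K, L, hK, hL, fun t ht u hu => ?_, fun t ht u hu => ?_⟩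
  · have hσg : ‖σ • g₁ u‖ ≤ ε / 2 := by
      rw [norm_smul, Real.norm_of_nonneg hσ.le]
      exact (mul_le_mul_of_nonneg_left ((hM u hu).trans (le_abs_self M)) hσ.le).trans hσM
    calc ‖h (t, u) - f t u‖ = ‖(h (t, u) - (f t u + σ • g₁ u)) + σ • g₁ u‖ := by congr 1; abel
      _ ≤ ε / 2 + ε / 2 := norm_add_le_of_le
        ((hclose (t, u) ⟨ht, hu⟩).le.trans (min_le_left _ _)) hσg
      _ = ε := add_halves ε
  · have herr : ⟪h (t, u) - (f t u + σ • g u), w u⟫ ≤ δ * |η| := by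
      rw [← hg₁ hu]
      exact (real_inner_le_norm _ _).trans (mul_le_mul
        (hclose (t, u) ⟨ht, frontier_subset_closure hu⟩).le
        ((hwη u hu).trans (le_abs_self η)) (norm_nonneg _) hδ.le)
    have hσg := mul_le_mul_of_nonneg_left (hgw u hu) hσ.le
    rw [inner_sub_left, inner_add_left, real_inner_smul_left] at herr
    linarith [hfw u hu t ht]

theorem periodic_solution_of_nondegenerate_bounding_functions_general (hT : 0 ≤ T)
    (hf : ContinuousOn (fun p : ℝ × E => f p.1 p.2) (Icc 0 T ×ˢ closure G))
    (hG : IsOpen G) (hGb : Bornology.IsBounded G)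
    (hw : ∀ u ∈ frontier G, IsOuterNormalAt G u (w u)) (hwη : ∀ u ∈ frontier G, ‖w u‖ ≤ η)
    (hfw : ∀ u ∈ frontier G, ∀ t ∈ Icc 0 T, ⟪f t u, w u⟫ ≤ 0) (hg : ContinuousOn g (frontier G))
    (hc : c < 0) (hgw : ∀ u ∈ frontier G, ⟪g u, w u⟫ ≤ c)
    (hfix : FixedPointProperty (closure G)) :
    ∃ y, IsPeriodicSolution f T (closure G) y := by
  refine exists_isPeriodicSolution_of_forall_approx hGb.isCompact_closure hT hf fun ε hε => ?_
  obtain ⟨h, K, L, hK, hL, hclose, hneg⟩ :=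
    exists_lipschitzWith_inner_neg_on_frontier hf hGb hwη hfw hg hc hgw hε
  obtain ⟨y, hy⟩ := exists_isPeriodicSolution_of_inward_on_frontier hT
    (fun t => hK.comp (LipschitzWith.prodMk_left t)) (fun x => hK.continuous.comp (by fun_prop))
    (fun t x => hL (t, x)) hG hGb hfix fun t ht u hu => ⟨w u, hw u hu, hneg t ht u hu⟩
  exact ⟨fun t x => h (t, x), y, hy, hclose⟩

end NonStrict

end PeriodicSolution

/-- main theorem. Let `(V_u)` be a family of non-degenerate bounding
functions for `G` with `⟪f(t,u), ∇V_u(u)⟫ ≤ 0` on the boundary, and suppose there is a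
continuous `g : ∂G → ℝ^N` with `sup_{u ∈ ∂G} ⟪g(u), ∇V_u(u)⟫ < 0`. If `cl G` is
homeomorphic to a closed ball, then `ẏ = f(t,y)` has a `T`-periodic solution in `cl G`. -/
theorem periodic_solution_of_nondegenerate_bounding_functions
    {N : ℕ} {T : ℝ} (hT : 0 < T)
    (Ω : Set (EuclideanSpace ℝ (Fin N))) (hΩ : IsOpen Ω)
    (f : ℝ → EuclideanSpace ℝ (Fin N) → EuclideanSpace ℝ (Fin N))
    (hf : ContinuousOn (fun p : ℝ × EuclideanSpace ℝ (Fin N) => f p.1 p.2)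
      (Icc (0 : ℝ) T ×ˢ Ω))
    (G : Set (EuclideanSpace ℝ (Fin N)))
    (hG : IsOpen G) (hGb : Bornology.IsBounded G) (hGΩ : closure G ⊆ Ω)
    (r : EuclideanSpace ℝ (Fin N) → ℝ)
    (V : EuclideanSpace ℝ (Fin N) → EuclideanSpace ℝ (Fin N) → ℝ)
    (hbd : ∀ u ∈ frontier G, 0 < r u ∧ ContDiffOn ℝ 1 (V u) (ball u (r u)) ∧
      V u u = 0 ∧ ∀ x ∈ G ∩ ball u (r u), V u x < 0)
    (hnondeg : ∃ ηm ηp : ℝ, 0 < ηm ∧ ηm ≤ ηp ∧ ∀ u ∈ frontier G,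
      ηm ≤ ‖gradient (V u) u‖ ∧ ‖gradient (V u) u‖ ≤ ηp)
    (hsub : ∀ u ∈ frontier G, ∀ t ∈ Icc (0 : ℝ) T,
      ⟪f t u, gradient (V u) u⟫ ≤ 0)
    (g : EuclideanSpace ℝ (Fin N) → EuclideanSpace ℝ (Fin N))
    (hg : ContinuousOn g (frontier G))
    (hgneg : ∃ c : ℝ, c < 0 ∧ ∀ u ∈ frontier G, ⟪g u, gradient (V u) u⟫ ≤ c)
    (hball : ∃ (x₀ : EuclideanSpace ℝ (Fin N)) (R : ℝ), 0 < R ∧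
      Nonempty ((closure G : Set (EuclideanSpace ℝ (Fin N))) ≃ₜ
        (closedBall x₀ R : Set (EuclideanSpace ℝ (Fin N))))) :
    ∃ y : ℝ → EuclideanSpace ℝ (Fin N),
      (∀ t ∈ Icc (0 : ℝ) T, y t ∈ Ω) ∧
      (∀ t ∈ Icc (0 : ℝ) T, HasDerivWithinAt y (f t (y t)) (Icc (0 : ℝ) T) t) ∧
      y 0 = y T ∧
      (∀ t ∈ Icc (0 : ℝ) T, y t ∈ closure G) := by
  obtain ⟨_, ηp, -, -, hη⟩ := hnondeg
  obtain ⟨c, hc, hgc⟩ := hgneg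
  obtain ⟨x₀, R, hR, ⟨e⟩⟩ := hball
  have hnormal : ∀ u ∈ frontier G, IsOuterNormalAt G u (gradient (V u) u) := by
    intro u hu
    obtain ⟨hru, hV, hVu, hneg⟩ := hbd u hu
    have hnhds : ball u (r u) ∈ 𝓝 u := ball_mem_nhds u hru
    refine isOuterNormalAt_gradient_of_isLocalMaxOn
      ((hV.differentiableOn one_ne_zero).differentiableAt hnhds) ?_
    filter_upwards [self_mem_nhdsWithin, mem_nhdsWithin_of_mem_nhds hnhds] with x hxG hx
    exact (hneg x ⟨hxG, hx⟩).le.trans_eq hVu.symm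
  obtain ⟨y, hy⟩ := periodic_solution_of_nondegenerate_bounding_functions_general hT.le
    (hf.mono (prod_mono_right hGΩ)) hG hGb hnormal (fun u hu => (hη u hu).2) hsub hg hc hgc
    ((fixedPointProperty_closedBall x₀ hR).of_homeomorph e.symm)
  exact ⟨y, fun t ht => hGΩ (hy.mapsTo ht), hy.hasDerivWithinAt, hy.periodic, hy.mapsTo⟩
end

section
/- Let Ω ⊆ ℝ^N be open, f : [0,T] × Ω → ℝ^N continuous. Let V : Ω → ℝ be a C¹ function and c ∈ ℝ be such that the sub-level set M = {x ∈ Ω : V(x) ≤ c} is compact with nonempty interior. Assume ∇V(u) ≠ 0 for all u ∈ ∂M and ⟨f(t,u), ∇V(u)⟩ ≤ 0 for all u ∈ ∂M and t ∈ [0,T]. If M is homeomorphic to a closed ball of ℝ^N, then there exists a differentiable y : [0,T] → Ω with y'(t) = f(t, y(t)) for all t ∈ [0,T], y(0) = y(T), and y(t) ∈ M for all t ∈ [0,T]. -/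
open Set Metric
open scoped RealInnerProductSpace

/-! Brouwer's theorem comes from the argument of Milnor and Rogers. If `g` is `C¹` and vanishes on
the boundary of a compact set `s`, then for small `t` the map `id + t • g` is a bijection of `s`
with positive Jacobian, so `∫ x in s, det (1 + t • g' x)` is the volume of `s`. Being polynomial
in `t`, the integral equals the volume at `t = 1` as well. For a `C¹` retraction `id + g` of the
ball onto its sphere, however, the Jacobian vanishes identically, so no such retraction exists.

By compactness, when `f` is replaced by the strictly inward field `f - η • ∇ V`, all sufficiently
short Euler steps map `M` into itself. A fixed point of the composite of the steps over one period
is a closed Euler polygon in `M`, and a limit of such polygons, as the step and `η` tend to zero,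
is a periodic solution. -/

section Determinant

open Filter Module MeasureTheory Polynomial Topology

theorem exists_polynomial_eval_eq_det_one_add_smul_s12 {R V : Type*} [CommRing R] [Nontrivial R]
    [AddCommGroup V] [Module R V] [Module.Free R V] [Module.Finite R V] (L : End R V) :
    ∃ p : R[X], p.natDegree ≤ finrank R V ∧ ∀ t, p.eval t = LinearMap.det (1 + t • L) := by
  classical
  let b := Free.chooseBasis R V
  let A := LinearMap.toMatrix b b L
  refine ⟨((X : R[X]) • A.map C + (1 : Matrix _ _ R).map C).det, ?_, fun t => ?_⟩
  · rw [finrank_eq_card_chooseBasisIndex]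
    exact natDegree_det_X_add_C_le A 1
  · rw [add_comm, ← LinearMap.det_toMatrix b, ← coe_evalRingHom, RingHom.map_det]
    congr 1
    ext i j
    rcases eq_or_ne i j with rfl | hij <;> simp [A, mul_comm t, *]

theorem exists_polynomial_eval_eq_integral_det {E α : Type*} [NormedAddCommGroup E]
    [NormedSpace ℝ E] [FiniteDimensional ℝ E] [MeasurableSpace α] {μ : Measure α}
    (A : α → E →L[ℝ] E) (hA : ∀ t : ℝ, Integrable (fun x => (1 + t • A x).det) μ) :
    ∃ p : ℝ[X], ∀ t, p.eval t = ∫ x, (1 + t • A x).det ∂μ := by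
  obtain ⟨s, hs⟩ := Finset.exists_card_eq (α := ℝ) (finrank ℝ E + 1)
  choose p hdeg hp using fun x => exists_polynomial_eval_eq_det_one_add_smul_s12 (A x : E →ₗ[ℝ] E)
  have hdet (x : α) (t : ℝ) : (p x).eval t = (1 + t • A x).det := hp x t
  have hinterp (x : α) (t : ℝ) : (1 + t • A x).det =
      ∑ u ∈ s, (1 + u • A x).det * (Lagrange.basis s id u).eval t := by
    have hlt : (p x).degree < s.card :=
      degree_le_natDegree.trans_lt (by rw [hs]; exact_mod_cast Nat.lt_succ_of_le (hdeg x))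
    rw [← hdet, Lagrange.eq_interpolate (v := (id : ℝ → ℝ)) Function.injective_id.injOn hlt,
      Lagrange.interpolate_apply, eval_finsetSum]
    simp [hdet]
  refine ⟨∑ u ∈ s, C (∫ x, (1 + u • A x).det ∂μ) * Lagrange.basis s id u, fun t => ?_⟩
  simp_rw [hinterp _ t]
  rw [integral_finsetSum _ fun u _ => (hA u).mul_const _, eval_finsetSum]
  simp [integral_mul_const]

theorem eventually_forall_det_one_add_smul_pos {E α : Type*} [NormedAddCommGroup E]
    [NormedSpace ℝ E] {s : Set α} {A : α → E →L[ℝ] E} {C : ℝ} (hA : ∀ x ∈ s, ‖A x‖ ≤ C) :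
    ∀ᶠ t : ℝ in 𝓝 0, ∀ x ∈ s, 0 < (1 + t • A x).det := by
  have hpos : ∀ᶠ L : E →L[ℝ] E in 𝓝 1, 0 < L.det :=
    ContinuousLinearMap.continuous_det.continuousAt.eventually
      (lt_mem_nhds (by simp [ContinuousLinearMap.det]))
  obtain ⟨δ, hδ, hdet⟩ := Metric.eventually_nhds_iff.1 hpos
  have hsmall : ∀ᶠ t : ℝ in 𝓝 0, |t| * C < δ :=
    (by fun_prop : Continuous fun t : ℝ => |t| * C).continuousAt.eventually_lt_const (by simpa)
  filter_upwards [hsmall] with t ht x hx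
  refine hdet ?_
  rw [dist_eq_norm, add_sub_cancel_left, norm_smul, Real.norm_eq_abs]
  exact (mul_le_mul_of_nonneg_left (hA x hx) (abs_nonneg t)).trans_lt ht

end Determinant

section IdentityPerturbation

open scoped NNReal

variable {E : Type*} [NormedAddCommGroup E] [NormedSpace ℝ E] {K : ℝ≥0} {s : Set E}

theorem nonempty_inter_frontier_of_isPreconnected {X : Type*} [TopologicalSpace X] {s A : Set X}
    (hs : IsPreconnected s) (hA : (s ∩ A).Nonempty) (hAc : (s ∩ Aᶜ).Nonempty) :
    (s ∩ frontier A).Nonempty := by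
  by_contra h
  have hcover : s ⊆ interior A ∪ interior Aᶜ := fun x hx => by
    rw [← compl_frontier_eq_union_interior]
    exact fun hx' => h ⟨x, hx, hx'⟩
  obtain ⟨x, hxs, hxA⟩ := hA
  obtain ⟨y, hys, hyA⟩ := hAc
  have hx : x ∈ interior A := (hcover hxs).resolve_right fun h => interior_subset h hxA
  have hsub : s ⊆ interior A := hs.subset_left_of_subset_union isOpen_interior isOpen_interior
    (disjoint_compl_right.mono interior_subset interior_subset) hcover ⟨x, hxs, hx⟩
  exact hyA (interior_subset (hsub hys))

theorem lipschitzWith_indicator_of_eq_zero_on_frontier {F : Type*} [NormedAddCommGroup F]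
    {g : E → F} (hs : IsClosed s) (hg : LipschitzOnWith K g s) (h0 : ∀ x ∈ frontier s, g x = 0) :
    LipschitzWith K (s.indicator g) := by
  have hcross (x y : E) (hx : x ∈ s) (hy : y ∉ s) : ‖g x‖ ≤ K * ‖x - y‖ := by
    obtain ⟨z, hz, hzs⟩ := nonempty_inter_frontier_of_isPreconnected
      (convex_segment x y).isPreconnected
      ⟨x, left_mem_segment ℝ x y, hx⟩ ⟨y, right_mem_segment ℝ x y, hy⟩
    calc ‖g x‖ = ‖g x - g z‖ := by rw [h0 z hzs, sub_zero]
      _ ≤ K * dist x z := by rw [dist_eq_norm]; exact hg.norm_sub_le hx (hs.frontier_subset hzs)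
      _ ≤ K * ‖x - y‖ := by
        rw [← dist_eq_norm, ← dist_add_dist_of_mem_segment hz]
        gcongr
        exact le_add_of_nonneg_right dist_nonneg
  refine LipschitzWith.of_dist_le_mul fun x y => ?_
  rw [dist_eq_norm, dist_eq_norm]
  by_cases hx : x ∈ s <;> by_cases hy : y ∈ s
  · simpa [hx, hy] using hg.norm_sub_le hx hy
  · simpa [hx, hy] using hcross x y hx hy
  · simpa [hx, hy, norm_sub_rev] using hcross y x hy hx
  · simp only [indicator_of_notMem hx, indicator_of_notMem hy, sub_self, norm_zero]
    positivity

theorem bijective_id_add_of_lipschitzWith_s12 [CompleteSpace E] (hK : K < 1) {g : E → E}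
    (hg : LipschitzWith K g) : Function.Bijective fun x => x + g x := by
  have happrox : ApproximatesLinearOn (fun x => x + g x)
      (ContinuousLinearEquiv.refl ℝ E : E →L[ℝ] E) univ K := by
    intro x _ y _
    simpa [add_sub_add_comm] using hg.norm_sub_le x y
  have hK' : Subsingleton E ∨ K < ‖((ContinuousLinearEquiv.refl ℝ E).symm : E →L[ℝ] E)‖₊⁻¹ := by
    rcases subsingleton_or_nontrivial E with h | h
    · exact .inl h
    · simpa using Or.inr hK
  exact ⟨injOn_univ.1 (happrox.injOn hK'), happrox.surjective hK'⟩

-- Extending `g` by zero makes `x + g x` a bijection of the whole space that fixes `sᶜ`.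
theorem bijOn_id_add_of_eq_zero_on_frontier [CompleteSpace E] (hK : K < 1) {g : E → E}
    (hs : IsClosed s) (hg : LipschitzOnWith K g s) (h0 : ∀ x ∈ frontier s, g x = 0) :
    BijOn (fun x => x + g x) s s := by
  have hbij := bijective_id_add_of_lipschitzWith_s12 hK
    (lipschitzWith_indicator_of_eq_zero_on_frontier hs hg h0)
  have hcompl : (fun x => x + s.indicator g x) '' sᶜ = sᶜ :=
    (image_congr fun x hx => by simp [indicator_of_notMem hx]).trans (image_id _)
  have himage : (fun x => x + s.indicator g x) '' s = s :=
    compl_injective ((image_compl_eq hbij).symm.trans hcompl)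
  have hbijOn : BijOn (fun x => x + s.indicator g x) s s := by
    simpa only [himage] using hbij.injective.injOn.bijOn_image (s := s)
  exact hbijOn.congr fun x hx => by simp [indicator_of_mem hx]

end IdentityPerturbation

section IntegralOfJacobian

open Filter MeasureTheory Topology
open scoped NNReal

variable {E : Type*} [NormedAddCommGroup E] [NormedSpace ℝ E] [FiniteDimensional ℝ E]
  [MeasurableSpace E] [BorelSpace E] (μ : Measure E) [μ.IsAddHaarMeasure] {s : Set E}

theorem setIntegral_det_eq_measureReal_of_bijOn (hs : MeasurableSet s) {φ : E → E}
    {φ' : E → E →L[ℝ] E} (hφ : ∀ x ∈ s, HasFDerivWithinAt φ (φ' x) s x) (hbij : BijOn φ s s)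
    (hdet : ∀ x ∈ s, 0 ≤ (φ' x).det) : ∫ x in s, (φ' x).det ∂μ = μ.real s := by
  have h := integral_image_eq_integral_abs_det_fderiv_smul μ hs hφ hbij.injOn fun _ => (1 : ℝ)
  rw [hbij.image_eq] at h
  rw [← setIntegral_one_eq_measureReal, h]
  exact setIntegral_congr_fun hs fun x hx => by simp [abs_of_nonneg (hdet x hx)]

theorem eventually_setIntegral_det_one_add_smul_eq (hs : IsCompact s) {g : E → E}
    (hg : ContDiff ℝ 1 g) (h0 : ∀ x ∈ frontier s, g x = 0) :
    ∀ᶠ t : ℝ in 𝓝 0, ∫ x in s, (1 + t • fderiv ℝ g x).det ∂μ = μ.real s := by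
  have : CompleteSpace E := FiniteDimensional.complete ℝ E
  obtain ⟨C, hC⟩ := hs.exists_bound_of_continuousOn (hg.continuous_fderiv one_ne_zero).continuousOn
  obtain ⟨K, hK⟩ := hg.locallyLipschitz.locallyLipschitzOn.exists_lipschitzOnWith_of_compact hs
  have hsmall : ∀ᶠ t : ℝ in 𝓝 0, ‖t‖₊ * K < 1 :=
    (by fun_prop : Continuous fun t : ℝ => ‖t‖₊ * K).continuousAt.eventually_lt_const (by simp)
  filter_upwards [hsmall, eventually_forall_det_one_add_smul_pos hC] with t ht hdet
  have hbij : BijOn (fun x => x + t • g x) s s :=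
    bijOn_id_add_of_eq_zero_on_frontier ht hs.isClosed
      ((lipschitzWith_smul t).comp_lipschitzOnWith hK) fun x hx => by simp [h0 x hx]
  refine setIntegral_det_eq_measureReal_of_bijOn μ hs.measurableSet (fun x _ => ?_) hbij
    fun x hx => (hdet x hx).le
  exact ((hasFDerivAt_id x).add
    ((hg.differentiable one_ne_zero x).hasFDerivAt.const_smul t)).hasFDerivWithinAt

theorem setIntegral_det_fderiv_eq_measureReal (hs : IsCompact s) {r : E → E}
    (hr : ContDiff ℝ 1 r) (hid : ∀ x ∈ frontier s, r x = x) :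
    ∫ x in s, (fderiv ℝ r x).det ∂μ = μ.real s := by
  let g : E → E := fun x => r x - x
  have hg : ContDiff ℝ 1 g := hr.sub contDiff_id
  have hcont (t : ℝ) : Continuous fun x => (1 + t • fderiv ℝ g x).det :=
    ContinuousLinearMap.continuous_det.comp
      (continuous_const.add ((hg.continuous_fderiv one_ne_zero).const_smul t))
  obtain ⟨p, hp⟩ := exists_polynomial_eval_eq_integral_det (μ := μ.restrict s) (fderiv ℝ g)
    fun t => (hcont t).continuousOn.integrableOn_compact hs
  have hconst : p = .C (μ.real s) := by
    refine Polynomial.eq_of_infinite_eval_eq _ _ (infinite_of_mem_nhds (0 : ℝ) ?_)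
    filter_upwards [eventually_setIntegral_det_one_add_smul_eq μ hs hg fun x hx =>
      sub_eq_zero.2 (hid x hx)] with t ht
    simp [hp, ht]
  have hfderiv (x : E) : fderiv ℝ r x = 1 + (1 : ℝ) • fderiv ℝ g x := by
    have hgx : fderiv ℝ g x = fderiv ℝ r x - 1 :=
      ((hr.differentiable one_ne_zero x).hasFDerivAt.sub (hasFDerivAt_id x)).fderiv
    rw [hgx, one_smul, add_sub_cancel]
  simp_rw [hfderiv, ← hp, hconst, Polynomial.eval_C]

end IntegralOfJacobian

section Brouwer

universe u

variable {E : Type*} [NormedAddCommGroup E] [InnerProductSpace ℝ E]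

theorem det_eq_zero_of_norm_eq_const [FiniteDimensional ℝ E] {r : E → E} {r' : E →L[ℝ] E} {x : E}
    {R : ℝ} (hr : HasFDerivAt r r' x) (hR : R ≠ 0) (hnorm : ∀ y, ‖r y‖ = R) : r'.det = 0 := by
  by_contra hdet
  obtain ⟨w, hw⟩ : ∃ w, r' w = r x :=
    (LinearMap.equivOfDetNeZero (r' : E →ₗ[ℝ] E) hdet).surjective (r x)
  have hconst : HasFDerivAt (fun y => ⟪r y, r y⟫) (0 : E →L[ℝ] ℝ) x := by
    simp_rw [real_inner_self_eq_norm_sq, hnorm]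
    exact hasFDerivAt_const _ x
  have hzero : r x = 0 := by
    simpa [hw] using DFunLike.congr_fun ((hr.inner ℝ hr).unique hconst) w
  exact hR (by rw [← hnorm x, hzero, norm_zero])

variable [FiniteDimensional ℝ E] {R : ℝ}

theorem not_exists_contDiff_retraction_sphere (hR : 0 < R) :
    ¬∃ r : E → E, ContDiff ℝ 1 r ∧ (∀ x, ‖r x‖ = R) ∧ ∀ x, ‖x‖ = R → r x = x := by
  rintro ⟨r, hr, hnorm, hid⟩
  borelize E
  have hvol := setIntegral_det_fderiv_eq_measureReal MeasureTheory.volume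
    (isCompact_closedBall 0 R) hr fun x hx =>
      hid x (by simpa using frontier_closedBall_subset_sphere hx)
  have hdet (x : E) : (fderiv ℝ r x).det = 0 :=
    det_eq_zero_of_norm_eq_const (hr.differentiable one_ne_zero x).hasFDerivAt hR.ne' hnorm
  simp_rw [hdet, MeasureTheory.integral_zero] at hvol
  exact (ENNReal.toReal_pos (measure_closedBall_pos _ _ hR).ne'
    MeasureTheory.measure_closedBall_lt_top.ne).ne hvol

theorem exists_fixedPoint_of_contDiff (hR : 0 < R) {φ : E → E} (hφ : ContDiff ℝ 1 φ)
    (h0 : ∀ x, ‖x‖ = R → φ x = 0) : ∃ x, φ x = x := by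
  by_contra! hne
  have hsub (x : E) : x - φ x ≠ 0 := sub_ne_zero.2 (hne x).symm
  have hsmooth : ContDiff ℝ 1 fun x => x - φ x := contDiff_id.sub hφ
  refine not_exists_contDiff_retraction_sphere (E := E) hR
    ⟨fun x => (R * ‖x - φ x‖⁻¹) • (x - φ x), ?_, fun x => ?_, fun x hx => ?_⟩
  · exact (contDiff_const.mul ((hsmooth.norm ℝ hsub).inv
      fun x => norm_ne_zero_iff.2 (hsub x))).smul hsmooth
  · rw [norm_smul, norm_mul, norm_inv, norm_norm, Real.norm_of_nonneg hR.le,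
      inv_mul_cancel_right₀ (norm_ne_zero_iff.2 (hsub x))]
  · simp [h0 x hx, hx, hR.ne']

theorem exists_fixedPoint_of_eq_zero_outside {φ : E → E} (hφ : Continuous φ)
    (h0 : ∀ x, R ≤ ‖x‖ → φ x = 0) : ∃ x, φ x = x := by
  rcases le_or_gt R 0 with hR | hR
  · exact ⟨0, h0 0 (by simpa)⟩
  by_contra! hne
  obtain ⟨z, -, hz⟩ := (isCompact_closedBall (0 : E) R).exists_isMinOn
    ⟨0, by simpa using hR.le⟩ (f := fun x => ‖φ x - x‖) (by fun_prop)
  obtain ⟨ψ, hψ, happrox, hsupp⟩ := hφ.exists_contDiff_approx 1 (ε := fun _ => ‖φ z - z‖)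
    continuous_const fun _ => norm_pos_iff.2 (sub_ne_zero.2 (hne z))
  have hψ0 (x : E) (hx : R ≤ ‖x‖) : ψ x = 0 := by
    by_contra h
    exact hsupp h (h0 x hx)
  obtain ⟨x, hx⟩ := exists_fixedPoint_of_contDiff hR (mod_cast hψ) fun x hx => hψ0 x hx.ge
  have hxR : ‖x‖ ≤ R := by
    by_contra! h
    have hx0 : x = 0 := hx.symm.trans (hψ0 x h.le)
    exact hR.not_gt (by simpa [hx0] using h)
  have hclose : ‖φ x - x‖ < ‖φ z - z‖ := by
    simpa only [hx, dist_comm x, dist_eq_norm] using happrox x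
  exact hclose.not_ge (hz (by simpa using hxR))

theorem exists_fixedPoint_of_bounded {φ : E → E} (hφ : Continuous φ) (hbound : ∀ x, ‖φ x‖ ≤ R) :
    ∃ x, φ x = x := by
  let χ : E → ℝ := fun x => min 1 (max 0 (R + 1 - ‖x‖))
  have hχ1 (x : E) (hx : ‖x‖ ≤ R) : χ x = 1 := min_eq_left (le_max_of_le_right (by linarith))
  obtain ⟨x, hx⟩ := exists_fixedPoint_of_eq_zero_outside (R := R + 1) (φ := fun x => χ x • φ x)
    (by fun_prop) fun x hx => by simp [χ, hx]
  have hxR : ‖x‖ ≤ R := by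
    calc ‖x‖ = ‖χ x • φ x‖ := congrArg norm hx.symm
    _ = χ x * ‖φ x‖ := by rw [norm_smul, Real.norm_of_nonneg (by positivity)]
    _ ≤ 1 * ‖φ x‖ := by gcongr; exact min_le_left _ _
    _ ≤ R := by simpa using hbound x
  exact ⟨x, by rwa [hχ1 x hxR, one_smul] at hx⟩

/-- The fixed point property: every continuous self-map of `X` has a fixed point. -/
def HasFixedPointProperty (X : Type*) [TopologicalSpace X] : Prop :=
  ∀ φ : C(X, X), ∃ x, φ x = x

namespace HasFixedPointProperty

theorem of_homeomorph {X Y : Type*} [TopologicalSpace X] [TopologicalSpace Y]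
    (hY : HasFixedPointProperty Y) (e : X ≃ₜ Y) : HasFixedPointProperty X := by
  intro φ
  obtain ⟨y, hy⟩ := hY ⟨e ∘ φ ∘ e.symm, by fun_prop⟩
  exact ⟨e.symm y, e.injective (by simpa using hy)⟩

theorem of_isCompact_of_tietzeExtension {E : Type u} [NormedAddCommGroup E]
    [InnerProductSpace ℝ E] [FiniteDimensional ℝ E] {K : Set E} (hK : IsCompact K)
    [TietzeExtension.{u, u} K] : HasFixedPointProperty K := by
  intro φ
  obtain ⟨g, hg⟩ := φ.exists_restrict_eq hK.isClosed
  obtain ⟨R, hR⟩ := hK.exists_bound_of_continuousOn continuousOn_id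
  obtain ⟨x, hx⟩ := exists_fixedPoint_of_bounded (φ := fun x => (g x : E)) (by fun_prop)
    fun x => hR _ (g x).2
  have hxK : x ∈ K := hx ▸ (g x).2
  exact ⟨⟨x, hxK⟩, Subtype.ext (by rw [← hg]; exact hx)⟩

theorem closedBall (x₀ : E) (hR : 0 < R) : HasFixedPointProperty (Metric.closedBall x₀ R) :=
  have := Metric.instTietzeExtensionClosedBall ℝ x₀ hR
  of_isCompact_of_tietzeExtension (isCompact_closedBall x₀ R)

end HasFixedPointProperty

end Brouwer

section SublevelSet

open Filter Topology

theorem eventually_forall_mem_of_forall_eventually_nhdsWithin {α X : Type*} [TopologicalSpace X]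
    {l : Filter α} {K : Set X} {P : α → X → Prop} (hK : IsCompact K)
    (h : ∀ x ∈ K, ∀ᶠ z in l ×ˢ 𝓝[K] x, P z.1 z.2) : ∀ᶠ a in l, ∀ x ∈ K, P a x := by
  have hnhds (x : X) (hx : x ∈ K) : {z : α × X | z.2 ∈ K → P z.1 z.2} ∈ l ×ˢ 𝓝 x := by
    obtain ⟨s, hs, t, ht, hst⟩ := mem_prod_iff.1 (h x hx)
    exact mem_of_superset (prod_mem_prod hs (mem_nhdsWithin_iff_eventually.1 ht))
      fun z hz hzK => hst ⟨hz.1, hz.2 hzK⟩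
  have hprod : ∀ᶠ z in l ×ˢ 𝓝ˢ K, z.2 ∈ K → P z.1 z.2 := hK.mem_prod_nhdsSet_of_forall hnhds
  filter_upwards [hprod.curry] with a ha x hx
  exact ha.self_of_nhdsSet x hx hx

variable {E : Type*} [NormedAddCommGroup E] [NormedSpace ℝ E] {V : E → ℝ}
  {Ω M : Set E} {c : ℝ}

theorem eventually_add_smul_lt_of_hasStrictFDerivAt {V' : E →L[ℝ] ℝ} {x₀ w₀ : E}
    (hV : HasStrictFDerivAt V V' x₀) (hw₀ : V' w₀ < 0) :
    ∀ᶠ z : ℝ × E × E in 𝓝[>] 0 ×ˢ 𝓝 x₀ ×ˢ 𝓝 w₀, V (z.2.1 + z.1 • z.2.2) < V z.2.1 := by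
  let l : Filter (ℝ × E × E) := 𝓝[>] 0 ×ˢ 𝓝 x₀ ×ˢ 𝓝 w₀
  have hh : Tendsto (fun z : ℝ × E × E => z.1) l (𝓝 0) := tendsto_fst.mono_right inf_le_left
  have hx : Tendsto (fun z : ℝ × E × E => z.2.1) l (𝓝 x₀) := tendsto_fst.comp tendsto_snd
  have hw : Tendsto (fun z : ℝ × E × E => z.2.2) l (𝓝 w₀) := tendsto_snd.comp tendsto_snd
  have hstep : Tendsto (fun z : ℝ × E × E => z.2.1 + z.1 • z.2.2) l (𝓝 x₀) := by
    simpa using hx.add (hh.smul hw)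
  have hbound : (fun z : ℝ × E × E => z.1 • z.2.2) =O[l] fun z => z.1 := by
    simpa using (Asymptotics.isBigO_refl (fun z : ℝ × E × E => z.1) l).smul (hw.isBigO_one ℝ)
  have hlin : (fun z : ℝ × E × E => V (z.2.1 + z.1 • z.2.2) - V z.2.1 - z.1 * V' z.2.2)
      =o[l] fun z => z.1 := by
    refine Asymptotics.IsLittleO.trans_isBigO ?_ hbound
    simpa [Function.comp_def] using hV.isLittleO.comp_tendsto (hstep.prodMk_nhds hx)
  have hslope : ∀ᶠ z in l, V' z.2.2 < V' w₀ / 2 :=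
    ((V'.continuous.tendsto w₀).comp hw).eventually_lt_const (by linarith)
  have hpos : ∀ᶠ z in l, 0 < z.1 := tendsto_fst.eventually self_mem_nhdsWithin
  filter_upwards [hlin.def (c := -(V' w₀ / 2)) (by linarith), hslope, hpos] with z hz hslope hpos
  rw [Real.norm_of_nonneg hpos.le] at hz
  nlinarith [(le_abs_self _).trans hz, mul_lt_mul_of_pos_left hslope hpos]

theorem eventually_add_smul_mem_sublevel {x₀ w₀ : E} (hM : M = {x ∈ Ω | V x ≤ c})
    (hΩ : Ω ∈ 𝓝 x₀) (hV : ContDiffAt ℝ 1 V x₀) (hx₀ : x₀ ∈ M)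
    (hw₀ : x₀ ∈ frontier M → fderiv ℝ V x₀ w₀ < 0) :
    ∀ᶠ z : ℝ × E × E in 𝓝[>] 0 ×ˢ 𝓝[M] x₀ ×ˢ 𝓝 w₀, z.2.1 + z.1 • z.2.2 ∈ M := by
  have hle : 𝓝[>] (0 : ℝ) ×ˢ 𝓝[M] x₀ ×ˢ 𝓝 w₀ ≤ 𝓝[>] 0 ×ˢ 𝓝 x₀ ×ˢ 𝓝 w₀ := by
    gcongr
    exact nhdsWithin_le_nhds
  have hstep : Tendsto (fun z : ℝ × E × E => z.2.1 + z.1 • z.2.2)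
      (𝓝[>] 0 ×ˢ 𝓝[M] x₀ ×ˢ 𝓝 w₀) (𝓝 x₀) := by
    have hcont : Continuous fun z : ℝ × E × E => z.2.1 + z.1 • z.2.2 := by fun_prop
    refine (hcont.tendsto' (0, x₀, w₀) x₀ (by simp)).mono_left (hle.trans ?_)
    rw [nhds_prod_eq, nhds_prod_eq]
    gcongr
    exact nhdsWithin_le_nhds
  by_cases hint : x₀ ∈ interior M
  · exact hstep (mem_interior_iff_mem_nhds.1 hint)
  have hdecrease := (eventually_add_smul_lt_of_hasStrictFDerivAt
    (hV.hasStrictFDerivAt one_ne_zero) (hw₀ ⟨subset_closure hx₀, hint⟩)).filter_mono hle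
  have hmem : ∀ᶠ z : ℝ × E × E in 𝓝[>] 0 ×ˢ 𝓝[M] x₀ ×ˢ 𝓝 w₀, z.2.1 ∈ M :=
    (tendsto_fst.comp tendsto_snd).eventually self_mem_nhdsWithin
  filter_upwards [hdecrease, hmem, hstep hΩ] with z hlt hz hzΩ
  rw [hM] at hz ⊢
  exact ⟨hzΩ, hlt.le.trans hz.2⟩

theorem eventually_forall_add_smul_mem_sublevel {X : Type*} [TopologicalSpace X] {S : Set X}
    {G : X → E → E} (hM : M = {x ∈ Ω | V x ≤ c}) (hΩ : IsOpen Ω) (hV : ContDiffOn ℝ 1 V Ω)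
    (hS : IsCompact S) (hMc : IsCompact M)
    (hG : ContinuousOn (fun p : X × E => G p.1 p.2) (S ×ˢ M))
    (hneg : ∀ u ∈ frontier M, ∀ t ∈ S, fderiv ℝ V u (G t u) < 0) :
    ∀ᶠ h : ℝ in 𝓝[>] 0, ∀ t ∈ S, ∀ x ∈ M, x + h • G t x ∈ M := by
  have hlocal : ∀ᶠ h : ℝ in 𝓝[>] 0, ∀ p ∈ S ×ˢ M, p.2 + h • G p.1 p.2 ∈ M := by
    refine eventually_forall_mem_of_forall_eventually_nhdsWithin (hS.prod hMc) ?_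
    rintro ⟨t₀, x₀⟩ ⟨ht₀, hx₀⟩
    have hΩx₀ : Ω ∈ 𝓝 x₀ := hΩ.mem_nhds (hM.subset hx₀).1
    have hpoint : Tendsto (fun p : X × E => p.2) (𝓝[S ×ˢ M] (t₀, x₀))
        (𝓝[M] x₀) := by
      rw [nhdsWithin_prod_eq]
      exact tendsto_snd
    exact (tendsto_id.prodMap (hpoint.prodMk (hG (t₀, x₀) ⟨ht₀, hx₀⟩))).eventually
      (eventually_add_smul_mem_sublevel hM hΩx₀ (hV.contDiffAt hΩx₀) hx₀
        fun hfr => hneg x₀ hfr t₀ ht₀)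
  filter_upwards [hlocal] with h hh t ht x hx using hh (t, x) ⟨ht, hx⟩

end SublevelSet

section Cycle

variable {X : Type*} [TopologicalSpace X] {M : Set X}

namespace HasFixedPointProperty

theorem exists_mem_eq (hM : HasFixedPointProperty M) {φ : X → X} (hφ : ContinuousOn φ M)
    (hmaps : MapsTo φ M M) : ∃ x ∈ M, φ x = x := by
  obtain ⟨x, hx⟩ := hM ⟨hmaps.restrict φ M M, hφ.mapsToRestrict hmaps⟩
  exact ⟨x, x.2, congrArg Subtype.val hx⟩

theorem exists_cycle (hM : HasFixedPointProperty M) {φ : ℕ → X → X} {n : ℕ}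
    (hφ : ∀ k < n, ContinuousOn (φ k) M) (hmaps : ∀ k < n, MapsTo (φ k) M M) :
    ∃ x : ℕ → X, (∀ k ≤ n, x k ∈ M) ∧ x n = x 0 ∧ ∀ k < n, x (k + 1) = φ k (x k) := by
  let ψ : ℕ → X → X := fun k x => k.rec x φ
  have hψ (k : ℕ) (hk : k ≤ n) : ContinuousOn (ψ k) M ∧ MapsTo (ψ k) M M := by
    induction k with
    | zero => exact ⟨continuousOn_id, mapsTo_id M⟩
    | succ k ih =>
      obtain ⟨hcont, hmem⟩ := ih (by omega)
      exact ⟨(hφ k hk).comp hcont hmem, (hmaps k hk).comp hmem⟩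
  obtain ⟨x, hx, hfix⟩ := hM.exists_mem_eq (hψ n le_rfl).1 (hψ n le_rfl).2
  exact ⟨fun k => ψ k x, fun k hk => (hψ k hk).2 hx, hfix, fun k _ => rfl⟩

end HasFixedPointProperty

end Cycle

section EulerOrbit

variable {E : Type*} [NormedAddCommGroup E] [NormedSpace ℝ E]

/-- The points `x 0, …, x n` of `M` form an Euler polygon for `ẏ = f(t, y)` with step `h`, started
at time `0`, where the slope of each step is allowed an error `ε`. -/
structure IsEulerOrbit (f : ℝ → E → E) (M : Set E) (h : ℝ) (n : ℕ) (ε : ℝ) (x : ℕ → E) : Prop where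
  mem : ∀ k ≤ n, x k ∈ M
  step : ∀ k < n, ‖x (k + 1) - x k - h • f (k * h) (x k)‖ ≤ h * ε

theorem natCast_mul_mem_Icc {h T : ℝ} {k n : ℕ} (hh : 0 ≤ h) (hnT : n * h ≤ T) (hk : k ≤ n) :
    k * h ∈ Icc 0 T :=
  ⟨by positivity, le_trans (by gcongr) hnT⟩

theorem norm_sub_sub_smul_le_of_forall_step {x : ℕ → E} {h e : ℝ} {v : E} {i j : ℕ} (hij : i ≤ j)
    (hstep : ∀ k ∈ Ico i j, ‖x (k + 1) - x k - h • v‖ ≤ h * e) :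
    ‖x j - x i - (j * h - i * h) • v‖ ≤ (j * h - i * h) * e := by
  induction j, hij using Nat.le_induction with
  | base => simp
  | succ j hij ih =>
    have hsplit : x (j + 1) - x i - ((j + 1 : ℕ) * h - i * h) • v =
        (x j - x i - (j * h - i * h) • v) + (x (j + 1) - x j - h • v) := by
      push_cast
      module
    calc ‖x (j + 1) - x i - ((j + 1 : ℕ) * h - i * h) • v‖
      _ ≤ ‖x j - x i - (j * h - i * h) • v‖ + ‖x (j + 1) - x j - h • v‖ :=
        hsplit ▸ norm_add_le _ _
      _ ≤ (j * h - i * h) * e + h * e :=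
        add_le_add (ih fun k hk => hstep k ⟨hk.1, hk.2.trans j.lt_succ_self⟩)
          (hstep j ⟨hij, j.lt_succ_self⟩)
      _ = ((j + 1 : ℕ) * h - i * h) * e := by push_cast; ring

namespace IsEulerOrbit

variable {f : ℝ → E → E} {M : Set E} {h ε : ℝ} {n : ℕ} {x : ℕ → E}

theorem mono {ε' : ℝ} (hx : IsEulerOrbit f M h n ε x) (hh : 0 ≤ h) (hε : ε ≤ ε') :
    IsEulerOrbit f M h n ε' x :=
  ⟨hx.mem, fun k hk => (hx.step k hk).trans (by gcongr)⟩

theorem norm_sub_sub_smul_le (hx : IsEulerOrbit f M h n ε x) (hh : 0 ≤ h) {i j : ℕ} (hi : i ≤ n)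
    (hj : j ≤ n) {v : E} {e : ℝ} (hv : ∀ k ∈ Ico (min i j) (max i j), ‖f (k * h) (x k) - v‖ ≤ e) :
    ‖x j - x i - (j * h - i * h) • v‖ ≤ |j * h - i * h| * (ε + e) := by
  wlog hij : i ≤ j generalizing i j
  · have hneg : x j - x i - (j * h - i * h) • v = -(x i - x j - (i * h - j * h) • v) := by module
    rw [hneg, norm_neg, abs_sub_comm]
    exact this hj hi (by rwa [min_comm, max_comm]) (le_of_not_ge hij)
  rw [min_eq_left hij, max_eq_right hij] at hv
  rw [abs_of_nonneg (sub_nonneg.2 (by gcongr))]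
  refine norm_sub_sub_smul_le_of_forall_step hij fun k hk => ?_
  calc ‖x (k + 1) - x k - h • v‖
    _ = ‖(x (k + 1) - x k - h • f (k * h) (x k)) + h • (f (k * h) (x k) - v)‖ := by
      congr 1
      module
    _ ≤ h * ε + h * e := by
      refine norm_add_le_of_le (hx.step k (hk.2.trans_le hj)) ?_
      rw [norm_smul, Real.norm_of_nonneg hh]
      exact mul_le_mul_of_nonneg_left (hv k hk) hh
    _ = h * (ε + e) := by ring

end IsEulerOrbit

-- The nodes of a polygon inherit a common Lipschitz constant from a bound on `f`, so a common
-- modulus of continuity controls `f` along all polygons.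
theorem exists_forall_isEulerOrbit_norm_sub_sub_smul_le {f : ℝ → E → E} {M : Set E} {T ε : ℝ}
    (hM : IsCompact M) (hf : ContinuousOn (fun p : ℝ × E => f p.1 p.2) (Icc 0 T ×ˢ M))
    (hε : 0 < ε) :
    ∃ δ > 0, ∀ {h : ℝ} {n : ℕ} {x : ℕ → E}, 0 ≤ h → n * h ≤ T → IsEulerOrbit f M h n (ε / 2) x →
      ∀ i ≤ n, ∀ j ≤ n, |j * h - i * h| < δ →
        ‖x j - x i - (j * h - i * h) • f (i * h) (x i)‖ ≤ |j * h - i * h| * ε := by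
  have hK : IsCompact (Icc 0 T ×ˢ M) := isCompact_Icc.prod hM
  obtain ⟨C, hC⟩ := hK.exists_bound_of_continuousOn hf
  obtain ⟨ρ, hρ, hfρ⟩ :=
    Metric.uniformContinuousOn_iff.1 (hK.uniformContinuousOn_of_continuous hf) (ε / 2) (half_pos hε)
  let L : ℝ := 1 + (ε / 2 + |C|)
  refine ⟨ρ / L, by positivity, fun {h n x} hh hnT hx i hi j hj hδ => ?_⟩
  rw [lt_div_iff₀ (by positivity)] at hδ
  have hmem (k : ℕ) (hk : k ≤ n) : ((k * h : ℝ), x k) ∈ Icc 0 T ×ˢ M :=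
    ⟨natCast_mul_mem_Icc hh hnT hk, hx.mem k hk⟩
  have hlip (k : ℕ) (hk : k ≤ n) : ‖x k - x i‖ ≤ |k * h - i * h| * (ε / 2 + |C|) := by
    simpa using hx.norm_sub_sub_smul_le hh hi hk (v := 0) (e := |C|) fun l hl => by
      simpa using (hC _ (hmem l (hl.2.le.trans (max_le hi hk)))).trans (le_abs_self C)
  have hclose (k : ℕ) (hk : k ∈ Ico (min i j) (max i j)) :
      ‖f (k * h) (x k) - f (i * h) (x i)‖ ≤ ε / 2 := by
    have hkn : k ≤ n := hk.2.le.trans (max_le hi hj)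
    have hkj : |k * h - i * h| ≤ |j * h - i * h| :=
      abs_sub_left_of_mem_uIcc
        ((Nat.mono_cast.mul_const hh).mapsTo_uIcc (Ico_subset_Icc_self hk))
    have hkρ : |k * h - i * h| * 1 + |k * h - i * h| * (ε / 2 + |C|) < ρ := by
      rw [← mul_add]
      exact (mul_le_mul_of_nonneg_right hkj (by positivity)).trans_lt hδ
    have hdist : dist ((k * h : ℝ), x k) ((i * h : ℝ), x i) < ρ := by
      rw [Prod.dist_eq, dist_eq_norm, dist_eq_norm, Real.norm_eq_abs]
      refine max_lt (lt_of_le_of_lt ?_ hkρ) ((hlip k hkn).trans_lt (lt_of_le_of_lt ?_ hkρ))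
      · rw [mul_one]
        exact le_add_of_nonneg_right (by positivity)
      · exact le_add_of_nonneg_left (by positivity)
    rw [← dist_eq_norm]
    exact (hfρ _ (hmem k hkn) _ (hmem i hi) hdist).le
  simpa using hx.norm_sub_sub_smul_le hh hi hj hclose

end EulerOrbit

section Limit

open Filter Topology

variable {E : Type*} [NormedAddCommGroup E] [NormedSpace ℝ E] {f : ℝ → E → E} {M : Set E} {T : ℝ}

theorem tendsto_floor_div_mul {ι : Type*} {l : Filter ι} {h : ι → ℝ}
    (hh : Tendsto h l (𝓝[>] 0)) {t : ℝ} (ht : 0 ≤ t) :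
    Tendsto (fun m => ⌊t / h m⌋₊ * h m) l (𝓝 t) := by
  simpa [Function.comp_def, div_eq_mul_inv] using
    (tendsto_nat_floor_mul_div_atTop ht).comp (tendsto_inv_nhdsGT_zero.comp hh)

theorem floor_div_le_of_mul_eq {h t : ℝ} {n : ℕ} (hh : 0 < h) (hnT : n * h = T) (ht : t ≤ T) :
    ⌊t / h⌋₊ ≤ n :=
  Nat.floor_le_of_le ((div_le_iff₀ hh).2 (hnT ▸ ht))

theorem hasDerivWithinAt_of_tendsto_isEulerOrbit {ι : Type*} {l : Filter ι} [l.NeBot]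
    {h ε : ι → ℝ} {n : ι → ℕ} {x : ι → ℕ → E} {y : ℝ → E} (hM : IsCompact M)
    (hf : ContinuousOn (fun p : ℝ × E => f p.1 p.2) (Icc 0 T ×ˢ M))
    (hh : Tendsto h l (𝓝[>] 0)) (hε : Tendsto ε l (𝓝 0)) (hnT : ∀ m, n m * h m = T)
    (hx : ∀ m, IsEulerOrbit f M (h m) (n m) (ε m) (x m))
    (hy : ∀ t ∈ Icc 0 T, Tendsto (fun m => x m ⌊t / h m⌋₊) l (𝓝 (y t))) {t : ℝ}
    (ht : t ∈ Icc 0 T) : HasDerivWithinAt y (f t (y t)) (Icc 0 T) t := by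
  have hpos : ∀ᶠ m in l, 0 < h m := hh.eventually self_mem_nhdsWithin
  have hmem (s : ℝ) (hs : s ∈ Icc 0 T) :
      ∀ᶠ m in l, (⌊s / h m⌋₊ * h m, x m ⌊s / h m⌋₊) ∈ Icc 0 T ×ˢ M := by
    filter_upwards [hpos] with m hm
    have hidx : ⌊s / h m⌋₊ ≤ n m := floor_div_le_of_mul_eq hm (hnT m) hs.2
    exact ⟨natCast_mul_mem_Icc hm.le (hnT m).le hidx, (hx m).mem _ hidx⟩
  have htime (s : ℝ) (hs : s ∈ Icc 0 T) : Tendsto (fun m => ⌊s / h m⌋₊ * h m) l (𝓝 s) :=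
    tendsto_floor_div_mul hh hs.1
  have hyM : y t ∈ M := hM.isClosed.mem_of_tendsto (hy t ht) ((hmem t ht).mono fun m hm => hm.2)
  have hslope : Tendsto (fun m => f (⌊t / h m⌋₊ * h m) (x m ⌊t / h m⌋₊)) l (𝓝 (f t (y t))) :=
    (hf (t, y t) ⟨ht, hyM⟩).tendsto.comp
      (tendsto_nhdsWithin_iff.2 ⟨(htime t ht).prodMk_nhds (hy t ht), hmem t ht⟩)
  rw [hasDerivWithinAt_iff_isLittleO, Asymptotics.isLittleO_iff]
  intro c hc
  obtain ⟨δ, hδ, hlin⟩ := exists_forall_isEulerOrbit_norm_sub_sub_smul_le hM hf hc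
  filter_upwards [self_mem_nhdsWithin, nhdsWithin_le_nhds (ball_mem_nhds t hδ)] with s hs hst
  have hdiff := (htime s hs).sub (htime t ht)
  rw [Real.norm_eq_abs, mul_comm]
  refine le_of_tendsto_of_tendsto
    (((hy s hs).sub (hy t ht)).sub (hdiff.smul hslope)).norm (hdiff.abs.mul_const c) ?_
  filter_upwards [hpos, hε.eventually_le_const (half_pos hc), hdiff.abs.eventually_lt_const hst]
    with m hm hεm hclose
  exact hlin hm.le (hnT m).le ((hx m).mono hm.le hεm) _ (floor_div_le_of_mul_eq hm (hnT m) ht.2) _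
    (floor_div_le_of_mul_eq hm (hnT m) hs.2) hclose

theorem exists_tendsto_ultrafilter_of_isCompact {ι α X : Type*} [TopologicalSpace X] [Nonempty X]
    {K : Set X} (hK : IsCompact K) (U : Ultrafilter ι) {s : Set α} {Y : ι → α → X}
    (hY : ∀ a ∈ s, ∀ m, Y m a ∈ K) :
    ∃ y : α → X, ∀ a ∈ s, y a ∈ K ∧ Tendsto (fun m => Y m a) U (𝓝 (y a)) := by
  have hlim (a : α) (ha : a ∈ s) : ∃ z, z ∈ K ∧ Tendsto (fun m => Y m a) U (𝓝 z) :=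
    hK.ultrafilter_le_nhds (U.map fun m => Y m a)
      (le_principal_iff.2 (mem_map.2 (univ_mem' (hY a ha))))
  choose! y hy using hlim
  exact ⟨y, hy⟩

theorem exists_periodic_solution_of_forall_exists_isEulerOrbit (hT : 0 < T) (hM : IsCompact M)
    (hf : ContinuousOn (fun p : ℝ × E => f p.1 p.2) (Icc 0 T ×ˢ M))
    (horbit : ∀ ε > 0, ∃ᶠ n : ℕ in atTop, ∃ x, IsEulerOrbit f M (T / n) n ε x ∧ x n = x 0) :
    ∃ y : ℝ → E, (∀ t ∈ Icc 0 T, y t ∈ M) ∧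
      (∀ t ∈ Icc 0 T, HasDerivWithinAt y (f t (y t)) (Icc 0 T) t) ∧ y 0 = y T := by
  choose n hn x hx hclosed using fun m : ℕ =>
    (frequently_atTop.1 (horbit (1 / (m + 1)) Nat.one_div_pos_of_nat)) (m + 1)
  have hn0 (m : ℕ) : 0 < (n m : ℝ) := Nat.cast_pos.2 (m.succ_pos.trans_le (hn m))
  have hpos (m : ℕ) : 0 < T / n m := div_pos hT (hn0 m)
  have hnT (m : ℕ) : n m * (T / n m) = T := mul_div_cancel₀ T (hn0 m).ne'
  let U : Ultrafilter ℕ := hyperfilter ℕ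
  have hU : (U : Filter ℕ) ≤ atTop := Nat.hyperfilter_le_atTop
  have hn' : Tendsto n atTop atTop :=
    tendsto_atTop_mono (fun m => m.le_succ.trans (hn m)) tendsto_id
  have hstep : Tendsto (fun m => T / n m) atTop (𝓝[>] 0) := tendsto_nhdsWithin_iff.2
    ⟨(tendsto_const_div_atTop_nhds_zero_nat T).comp hn', Eventually.of_forall hpos⟩
  obtain ⟨y, hy⟩ := exists_tendsto_ultrafilter_of_isCompact hM U (s := Icc 0 T)
    (Y := fun m t => x m ⌊t / (T / n m)⌋₊) fun t ht m =>
      (hx m).mem _ (floor_div_le_of_mul_eq (hpos m) (hnT m) ht.2)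
  refine ⟨y, fun t ht => (hy t ht).1, fun t ht => ?_, ?_⟩
  · exact hasDerivWithinAt_of_tendsto_isEulerOrbit hM hf (hstep.mono_left hU)
      (tendsto_one_div_add_atTop_nhds_zero_nat.mono_left hU) hnT hx (fun s hs => (hy s hs).2) ht
  · have hend (m : ℕ) : x m ⌊T / (T / n m)⌋₊ = x m ⌊0 / (T / n m)⌋₊ := by
      rw [div_div_cancel₀ hT.ne', Nat.floor_natCast, zero_div, Nat.floor_zero, hclosed]
    exact tendsto_nhds_unique (hy 0 (left_mem_Icc.2 hT.le)).2
      ((hy T (right_mem_Icc.2 hT.le)).2.congr hend)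

end Limit

section PeriodicSolution

open Filter Topology

theorem eventually_exists_isEulerOrbit_of_step_mem {E : Type*} [NormedAddCommGroup E]
    [NormedSpace ℝ E] {f G : ℝ → E → E} {M : Set E} {T ε : ℝ} (hT : 0 < T)
    (hM : HasFixedPointProperty M) (hG : ∀ t ∈ Icc 0 T, ContinuousOn (G t) M)
    (hmem : ∀ᶠ h : ℝ in 𝓝[>] 0, ∀ t ∈ Icc 0 T, ∀ x ∈ M, x + h • G t x ∈ M)
    (hGf : ∀ t ∈ Icc 0 T, ∀ x ∈ M, ‖G t x - f t x‖ ≤ ε) :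
    ∀ᶠ n : ℕ in atTop, ∃ x, IsEulerOrbit f M (T / n) n ε x ∧ x n = x 0 := by
  have hstep : Tendsto (fun n : ℕ => T / n) atTop (𝓝[>] 0) := by
    refine tendsto_nhdsWithin_iff.2 ⟨tendsto_const_div_atTop_nhds_zero_nat T, ?_⟩
    filter_upwards [eventually_gt_atTop 0] with n hn
    exact div_pos hT (Nat.cast_pos.2 hn)
  filter_upwards [hstep.eventually hmem, eventually_gt_atTop 0] with n hmem hn
  have hh : 0 ≤ T / n := by positivity
  have htime (k : ℕ) (hk : k < n) : k * (T / n) ∈ Icc 0 T :=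
    natCast_mul_mem_Icc hh (mul_div_cancel₀ T (Nat.cast_pos.2 hn).ne').le hk.le
  obtain ⟨x, hxM, hclosed, hx⟩ := hM.exists_cycle (n := n)
    (φ := fun k x => x + (T / n) • G (k * (T / n)) x)
    (fun k hk => continuousOn_id.add ((hG _ (htime k hk)).const_smul _))
    fun k hk => hmem _ (htime k hk)
  refine ⟨x, ⟨hxM, fun k hk => ?_⟩, hclosed⟩
  rw [hx k hk, add_sub_cancel_left, ← smul_sub, norm_smul, Real.norm_of_nonneg hh]
  exact mul_le_mul_of_nonneg_left (hGf _ (htime k hk) _ (hxM k hk.le)) hh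

variable {E : Type*} [NormedAddCommGroup E] [InnerProductSpace ℝ E] [CompleteSpace E]
  {Ω M : Set E} {V : E → ℝ} {c T : ℝ} {f : ℝ → E → E}

theorem eventually_exists_isEulerOrbit_sublevel (hT : 0 < T) (hΩ : IsOpen Ω)
    (hV : ContDiffOn ℝ 1 V Ω) (hM : M = {x ∈ Ω | V x ≤ c}) (hMc : IsCompact M)
    (hfix : HasFixedPointProperty M)
    (hf : ContinuousOn (fun p : ℝ × E => f p.1 p.2) (Icc 0 T ×ˢ M))
    (hgrad : ∀ u ∈ frontier M, gradient V u ≠ 0)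
    (hsub : ∀ u ∈ frontier M, ∀ t ∈ Icc 0 T, ⟪f t u, gradient V u⟫ ≤ 0)
    {ε : ℝ} (hε : 0 < ε) :
    ∀ᶠ n : ℕ in atTop, ∃ x, IsEulerOrbit f M (T / n) n ε x ∧ x n = x 0 := by
  have hgradC : ContinuousOn (gradient V) M :=
    (InnerProductSpace.toDual ℝ E).symm.continuous.comp_continuousOn
      ((hV.continuousOn_fderiv_of_isOpen hΩ le_rfl).mono (hM.subset.trans (sep_subset _ _)))
  obtain ⟨C, hC⟩ := hMc.exists_bound_of_continuousOn hgradC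
  let η : ℝ := ε / (|C| + 1)
  have hη : 0 < η := by positivity
  let G : ℝ → E → E := fun t x => f t x - η • gradient V x
  have hG : ContinuousOn (fun p : ℝ × E => G p.1 p.2) (Icc 0 T ×ˢ M) :=
    hf.sub ((hgradC.comp continuousOn_snd fun p hp => hp.2).const_smul η)
  have hinward (u : E) (hu : u ∈ frontier M) (t : ℝ) (ht : t ∈ Icc 0 T) :
      fderiv ℝ V u (G t u) < 0 := by
    have hsq : 0 < η * ‖gradient V u‖ ^ 2 := by have := norm_pos_iff.2 (hgrad u hu); positivity
    rw [← inner_gradient_left, real_inner_comm, inner_sub_left, real_inner_smul_left,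
      real_inner_self_eq_norm_sq]
    linarith [hsub u hu t ht]
  refine eventually_exists_isEulerOrbit_of_step_mem hT hfix
    (fun t ht => hG.comp (continuousOn_const.prodMk continuousOn_id) fun x hx => ⟨ht, hx⟩)
    (eventually_forall_add_smul_mem_sublevel hM hΩ hV isCompact_Icc hMc hG hinward)
    fun t _ x hx => ?_
  calc ‖G t x - f t x‖ = η * ‖gradient V x‖ := by
        rw [sub_sub_cancel_left, norm_neg, norm_smul, Real.norm_of_nonneg hη.le]
    _ ≤ η * (|C| + 1) := by gcongr; linarith [hC x hx, le_abs_self C]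
    _ = ε := div_mul_cancel₀ ε (by positivity)

theorem periodic_solution_in_sublevel_set_general (hT : 0 < T) (hΩ : IsOpen Ω)
    (hV : ContDiffOn ℝ 1 V Ω) (hM : M = {x ∈ Ω | V x ≤ c}) (hMc : IsCompact M)
    (hfix : HasFixedPointProperty M)
    (hf : ContinuousOn (fun p : ℝ × E => f p.1 p.2) (Icc 0 T ×ˢ M))
    (hgrad : ∀ u ∈ frontier M, gradient V u ≠ 0)
    (hsub : ∀ u ∈ frontier M, ∀ t ∈ Icc 0 T, ⟪f t u, gradient V u⟫ ≤ 0) :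
    ∃ y : ℝ → E, (∀ t ∈ Icc 0 T, y t ∈ M) ∧
      (∀ t ∈ Icc 0 T, HasDerivWithinAt y (f t (y t)) (Icc 0 T) t) ∧ y 0 = y T :=
  exists_periodic_solution_of_forall_exists_isEulerOrbit hT hMc hf fun _ hε =>
    (eventually_exists_isEulerOrbit_sublevel hT hΩ hV hM hMc hfix hf hgrad hsub hε).frequently

end PeriodicSolution

/-- Corollary 3.1. Let `V` be `C¹` on the open set `Ω` and let the
sub-level set `M = {x ∈ Ω : V x ≤ c}` be compact with nonempty interior, with
`∇V(u) ≠ 0` and `⟪f(t,u), ∇V(u)⟫ ≤ 0` on `∂M`. If `M` is homeomorphic to a closed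
ball, then `ẏ = f(t,y)` has a `T`-periodic solution with values in `M`. -/
theorem periodic_solution_in_sublevel_set
    {N : ℕ} {T : ℝ} (hT : 0 < T)
    (Ω : Set (EuclideanSpace ℝ (Fin N))) (hΩ : IsOpen Ω)
    (f : ℝ → EuclideanSpace ℝ (Fin N) → EuclideanSpace ℝ (Fin N))
    (hf : ContinuousOn (fun p : ℝ × EuclideanSpace ℝ (Fin N) => f p.1 p.2)
      (Icc (0 : ℝ) T ×ˢ Ω))
    (V : EuclideanSpace ℝ (Fin N) → ℝ) (hV : ContDiffOn ℝ 1 V Ω) (c : ℝ)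
    (M : Set (EuclideanSpace ℝ (Fin N))) (hM : M = {x ∈ Ω | V x ≤ c})
    (hMcomp : IsCompact M) (hMint : (interior M).Nonempty)
    (hgrad : ∀ u ∈ frontier M, gradient V u ≠ 0)
    (hsub : ∀ u ∈ frontier M, ∀ t ∈ Icc (0 : ℝ) T, ⟪f t u, gradient V u⟫ ≤ 0)
    (hball : ∃ (x₀ : EuclideanSpace ℝ (Fin N)) (R : ℝ), 0 < R ∧
      Nonempty ((M : Set (EuclideanSpace ℝ (Fin N))) ≃ₜ
        (closedBall x₀ R : Set (EuclideanSpace ℝ (Fin N))))) :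
    ∃ y : ℝ → EuclideanSpace ℝ (Fin N),
      (∀ t ∈ Icc (0 : ℝ) T, y t ∈ Ω) ∧
      (∀ t ∈ Icc (0 : ℝ) T, HasDerivWithinAt y (f t (y t)) (Icc (0 : ℝ) T) t) ∧
      y 0 = y T ∧
      (∀ t ∈ Icc (0 : ℝ) T, y t ∈ M) := by
  have hMΩ : M ⊆ Ω := hM.subset.trans (sep_subset _ _)
  obtain ⟨x₀, R, hR, ⟨e⟩⟩ := hball
  obtain ⟨y, hyM, hy, hper⟩ := periodic_solution_in_sublevel_set_general hT hΩ hV hM hMcomp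
    ((HasFixedPointProperty.closedBall x₀ hR).of_homeomorph e)
    (hf.mono (prod_mono_right hMΩ)) hgrad hsub
  exact ⟨y, fun t ht => hMΩ (hyM t ht), hy, hper, hyM⟩
end

section
/- Let G ⊆ ℝ^N be a nonempty open bounded set with cl(G) strictly star-shaped with respect to a point p ∈ G, and let (V_u)_{u∈∂G} be a family of bounding functions for G. Then ⟨∇V_u(u), p − u⟩ ≤ 0 for all u ∈ ∂G. -/
open Set Metric
open scoped RealInnerProductSpace

/-! At each boundary point `u` the function `V_u` restricted to `G` has a local maximum, and
star-shapedness puts `p - u` in the positive tangent cone of `G` at `u`; the derivative of `V_u` in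
that direction is therefore nonpositive. -/

theorem isLocalMaxOn_of_forall_mem_inter_ball_le
    {X β : Type*} [PseudoMetricSpace X] [Preorder β] {f : X → β} {s : Set X} {a : X} {r : ℝ}
    (hr : 0 < r) (h : ∀ x ∈ s ∩ ball a r, f x ≤ f a) : IsLocalMaxOn f s a :=
  Filter.mem_of_superset (inter_mem_nhdsWithin s (ball_mem_nhds a hr)) h

section HilbertSpace

variable {E : Type*} [NormedAddCommGroup E] [InnerProductSpace ℝ E] [CompleteSpace E]
  {f : E → ℝ} {s : Set E}

theorem inner_nonpos_of_isLocalMaxOn_of_hasGradientAt {f' a y : E} (hmax : IsLocalMaxOn f s a)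
    (hf : HasGradientAt f f' a) (hy : y ∈ posTangentConeAt s a) : ⟪f', y⟫ ≤ 0 := by
  simpa only [InnerProductSpace.toDual_apply_apply] using
    hmax.hasFDerivWithinAt_nonpos hf.hasFDerivAt.hasFDerivWithinAt hy

theorem gradient_inner_nonpos_of_strictly_star_shaped_general {p u : E}
    (hstar : ∀ θ ∈ Ioo (0 : ℝ) 1, p + θ • (u - p) ∈ s) (hf : DifferentiableAt ℝ f u)
    (hmax : IsLocalMaxOn f s u) : ⟪gradient f u, p - u⟫ ≤ 0 := by
  have hseg : openSegment ℝ u p ⊆ s := by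
    rw [openSegment_symm, openSegment_eq_image']
    exact image_subset_iff.2 hstar
  exact inner_nonpos_of_isLocalMaxOn_of_hasGradientAt hmax hf.hasGradientAt
    (sub_mem_posTangentConeAt_of_openSegment_subset hseg)

end HilbertSpace

/-- Lemma 3.3. If `cl G` is strictly star-shaped with respect to
`p ∈ G` and `(V_u)` is a family of bounding functions for `G`, then
`⟪∇V_u(u), p - u⟫ ≤ 0` for all `u ∈ ∂G`. -/
theorem gradient_inner_nonpos_of_strictly_star_shaped
    {N : ℕ} (G : Set (EuclideanSpace ℝ (Fin N)))
    (hne : G.Nonempty) (hG : IsOpen G) (hGb : Bornology.IsBounded G)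
    (p : EuclideanSpace ℝ (Fin N)) (hp : p ∈ G)
    (hstar : ∀ u ∈ frontier G, ∀ θ : ℝ, 0 ≤ θ → θ < 1 → p + θ • (u - p) ∈ G)
    (r : EuclideanSpace ℝ (Fin N) → ℝ)
    (V : EuclideanSpace ℝ (Fin N) → EuclideanSpace ℝ (Fin N) → ℝ)
    (hbd : ∀ u ∈ frontier G, 0 < r u ∧ ContDiffOn ℝ 1 (V u) (ball u (r u)) ∧
      V u u = 0 ∧ ∀ x ∈ G ∩ ball u (r u), V u x < 0) :
    ∀ u ∈ frontier G, ⟪gradient (V u) u, p - u⟫ ≤ 0 := by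
  intro u hu
  obtain ⟨hr, hC, h0, hneg⟩ := hbd u hu
  have hdiff : DifferentiableAt ℝ (V u) u :=
    (hC.contDiffAt (ball_mem_nhds u hr)).differentiableAt_one
  have hmax : IsLocalMaxOn (V u) G u :=
    isLocalMaxOn_of_forall_mem_inter_ball_le hr fun x hx ↦ (hneg x hx).le.trans_eq h0.symm
  exact gradient_inner_nonpos_of_strictly_star_shaped_general
    (fun θ hθ ↦ hstar u hu θ hθ.1.le hθ.2) hdiff hmax
end

section
/- Let N ≥ 2 and let V : ℝ^N → ℝ be a C¹ function, p ∈ ℝ^N and c ∈ ℝ such that V(p) < c and the level set V^{-1}(c) is bounded and nonempty. Assume ⟨∇V(u), p − u⟩ < 0 for all u ∈ V^{-1}(c). Then the sub-level set M = {x ∈ ℝ^N : V(x) ≤ c} admits a radius δ > 0 with B[p,δ] ⊆ int M = {x : V(x) < c} such that M is strictly star-shaped with respect to every point of B[p,δ]. -/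
open Set Metric
open scoped RealInnerProductSpace

/-!
Along a ray from `q`, the radial hypothesis says that `V` is strictly increasing wherever it takes
the value `c`. Hence `V` can cross `c` only upwards, and a ray that ends in `{V ≤ c}` lies in
`{V < c}` before its endpoint. The radial hypothesis is an open condition on the centre `q` because
the level set is compact, so it passes from `p` to a small ball around `p`.
-/

open scoped Topology

theorem lt_of_deriv_pos_on_level {f f' : ℝ → ℝ} {a b c : ℝ} (hab : a < b)
    (hf : ∀ t ∈ Icc a b, HasDerivWithinAt f (f' t) (Icc a b) t)
    (hpos : ∀ t ∈ Icc a b, f t = c → 0 < f' t) (hb : f b ≤ c) : f a < c := by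
  by_contra! ha
  have hge : ∀ t ∈ Icc a b, c ≤ f t :=
    image_le_of_deriv_right_lt_deriv_boundary' (f := fun _ => c) (f' := fun _ => 0)
      continuousOn_const (fun t _ => hasDerivWithinAt_const t _ c) ha
      (fun t ht => (hf t ht).continuousWithinAt)
      (fun t ht => (hf t (Ico_subset_Icc_self ht)).mono_of_mem_nhdsWithin
        (Icc_mem_nhdsGE_of_mem ht))
      (fun t ht h => hpos t (Ico_subset_Icc_self ht) h.symm)
  have hb_mem : b ∈ Icc a b := right_mem_Icc.2 hab.le
  have hb_eq : f b = c := hb.antisymm (hge b hb_mem)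
  have hmin : IsMinOn f (Icc a b) b := fun t ht => hb_eq.trans_le (hge t ht)
  have hleft : a - b ∈ posTangentConeAt (Icc a b) b :=
    sub_mem_posTangentConeAt_of_segment_subset (segment_symm ℝ b a ▸ (segment_eq_Icc hab.le).le)
  have hnonneg : 0 ≤ (a - b) * f' b := by
    simpa using hmin.localize.hasFDerivWithinAt_nonneg (hf b hb_mem).hasFDerivWithinAt hleft
  exact (mul_neg_of_neg_of_pos (sub_neg.2 hab) (hpos b hb_mem hb_eq)).not_ge hnonneg

section NormedSpace

variable {E : Type*} [NormedAddCommGroup E] [NormedSpace ℝ E]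

/-- Strict star-shapedness of `M` with respect to `p`: every half-open segment `[p, u)` with
`u ∈ ∂M` lies in `int M`. The notion is meant for closures of bounded open sets with `p ∈ int M`;
these conditions are not part of the definition. -/
def StrictlyStarShaped (p : E) (M : Set E) : Prop :=
  ∀ u ∈ frontier M, ∀ θ : ℝ, 0 ≤ θ → θ < 1 → p + θ • (u - p) ∈ interior M

variable {V : E → ℝ} {p q : E} {c : ℝ}

theorem interior_sublevel_eq_of_fderiv_ne_zero (hV : Continuous V)
    (hcrit : ∀ u ∈ V ⁻¹' {c}, fderiv ℝ V u ≠ 0) :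
    interior {x | V x ≤ c} = {x | V x < c} := by
  refine Subset.antisymm (fun u hu => ?_) (lt_subset_interior_le hV continuous_const)
  have hle : V u ≤ c := interior_subset (s := {x | V x ≤ c}) hu
  refine hle.lt_of_ne fun hu_eq => hcrit u hu_eq ?_
  have hmax : IsLocalMax V u := by
    filter_upwards [mem_interior_iff_mem_nhds.1 hu] with x hx
    exact hx.trans_eq hu_eq.symm
  exact hmax.fderiv_eq_zero

theorem apply_add_smul_sub_lt_of_radial_fderiv_neg (hV : Differentiable ℝ V)
    (hrad : ∀ u ∈ V ⁻¹' {c}, fderiv ℝ V u (q - u) < 0) {x : E} (hx : V x ≤ c)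
    {θ : ℝ} (hθ₀ : 0 ≤ θ) (hθ₁ : θ < 1) : V (q + θ • (x - q)) < c := by
  let ray : ℝ → E := fun t => q + t • (x - q)
  have hray : ∀ t, HasDerivAt ray (x - q) t := fun t => by
    simpa [ray] using ((hasDerivAt_id t).smul_const (x - q)).const_add q
  have hderiv : ∀ t, HasDerivAt (V ∘ ray) (fderiv ℝ V (ray t) (x - q)) t := fun t =>
    (hV (ray t)).hasFDerivAt.comp_hasDerivAt t (hray t)
  refine lt_of_deriv_pos_on_level (f := V ∘ ray) hθ₁
    (fun t _ => (hderiv t).hasDerivWithinAt) (fun t ht htc => ?_) (by simpa [ray] using hx)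
  have hback : q - ray t = -(t • (x - q)) := sub_add_cancel_left q _
  have hmul : 0 < t * fderiv ℝ V (ray t) (x - q) := by
    simpa [hback] using hrad (ray t) htc
  exact pos_of_mul_pos_right hmul (hθ₀.trans ht.1)

theorem strictlyStarShaped_sublevel (hV : Differentiable ℝ V)
    (hrad : ∀ u ∈ V ⁻¹' {c}, fderiv ℝ V u (q - u) < 0) :
    StrictlyStarShaped q {x | V x ≤ c} := fun u hu _ hθ₀ hθ₁ =>
  have hu_le : V u ≤ c := (frontier_le_subset_eq hV.continuous continuous_const hu).le
  lt_subset_interior_le hV.continuous continuous_const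
    (apply_add_smul_sub_lt_of_radial_fderiv_neg hV hrad hu_le hθ₀ hθ₁)

theorem eventually_forall_apply_sub_neg {A : E → E →L[ℝ] ℝ} (hA : Continuous A) {K : Set E}
    (hK : IsCompact K) (hp : ∀ u ∈ K, A u (p - u) < 0) :
    ∀ᶠ q in 𝓝 p, ∀ u ∈ K, A u (q - u) < 0 := by
  have hcont : Continuous fun z : E × E => A z.2 (z.1 - z.2) := by fun_prop
  exact hK.eventually_forall_of_forall_eventually fun u hu =>
    hcont.continuousAt.eventually_lt continuousAt_const (hp u hu)

theorem sublevel_set_strictly_star_shaped_general (hV : ContDiff ℝ 1 V) (hpc : V p < c)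
    (hK : IsCompact (V ⁻¹' {c})) (hrad : ∀ u ∈ V ⁻¹' {c}, fderiv ℝ V u (p - u) < 0) :
    interior {x | V x ≤ c} = {x | V x < c} ∧
    ∃ δ > (0 : ℝ), closedBall p δ ⊆ {x | V x < c} ∧
      ∀ q ∈ closedBall p δ, StrictlyStarShaped q {x | V x ≤ c} := by
  have hcrit : ∀ u ∈ V ⁻¹' {c}, fderiv ℝ V u ≠ 0 := fun u hu h => by
    simpa [h] using hrad u hu
  have hlt : ∀ᶠ q in 𝓝 p, V q < c :=
    hV.continuous.continuousAt.eventually_lt continuousAt_const hpc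
  have hradial : ∀ᶠ q in 𝓝 p, ∀ u ∈ V ⁻¹' {c}, fderiv ℝ V u (q - u) < 0 :=
    eventually_forall_apply_sub_neg (hV.continuous_fderiv one_ne_zero) hK hrad
  obtain ⟨δ, hδ, hball⟩ := nhds_basis_closedBall.eventually_iff.1 (hlt.and hradial)
  exact ⟨interior_sublevel_eq_of_fderiv_ne_zero hV.continuous hcrit, δ, hδ,
    fun q hq => (hball hq).1,
    fun q hq => strictlyStarShaped_sublevel (hV.differentiable one_ne_zero) (hball hq).2⟩

end NormedSpace

/-- Lemma 3.4. Let `N ≥ 2`, `V : ℝ^N → ℝ` of class `C¹`, `V p < c`,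
with `V⁻¹(c)` bounded and nonempty and `⟪∇V(u), p - u⟫ < 0` on `V⁻¹(c)`. Then the
sub-level set `M = {V ≤ c}` has interior `{V < c}` and is strictly star-shaped with
respect to every point of some closed ball `B[p,δ] ⊆ int M`. -/
theorem sublevel_set_strictly_star_shaped
    {N : ℕ} (hN : 2 ≤ N)
    (V : EuclideanSpace ℝ (Fin N) → ℝ) (hV : ContDiff ℝ 1 V)
    (p : EuclideanSpace ℝ (Fin N)) (c : ℝ) (hpc : V p < c)
    (hbdd : Bornology.IsBounded (V ⁻¹' {c})) (hlevne : (V ⁻¹' {c}).Nonempty)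
    (hrad : ∀ u ∈ V ⁻¹' {c}, ⟪gradient V u, p - u⟫ < 0) :
    interior {x | V x ≤ c} = {x | V x < c} ∧
    ∃ δ > (0 : ℝ), closedBall p δ ⊆ {x | V x < c} ∧
      ∀ q ∈ closedBall p δ, ∀ u ∈ frontier {x | V x ≤ c},
        ∀ θ : ℝ, 0 ≤ θ → θ < 1 → q + θ • (u - q) ∈ interior {x | V x ≤ c} :=
  sublevel_set_strictly_star_shaped_general hV hpc
    (isCompact_of_isClosed_isBounded (isClosed_singleton.preimage hV.continuous) hbdd)
    (by simpa only [inner_gradient_left] using hrad)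
end
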